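/- arXiv:1905.02176 — 3 statements merged into one kernel-verified Lean document; each statement's English description precedes it below -/
import Mathlib

section
/- Let n ≥ 2, let Ω ⊂ ℝⁿ be open and bounded with Lipschitz boundary S = ∂Ω, let p ∈ S and r > 0, and assume the limit Γ(p) := lim_{ε→0⁺} H^{n−1}(Ω ∩ ∂B_ε(p)) / H^{n−1}(∂B_ε(p)) exists. Then the principal value limit lim_{ε→0⁺} ∫_{S ∩ (B_r(p) ∖ B_ε(p))} (1 − rⁿ/|x − p|ⁿ) (x − p) · ν dH^{n−1}(x) exists and is finite. -/
open MeasureTheory Metric Filter Real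
open scoped Topology RealInnerProductSpace ENNReal NNReal

noncomputable section

/-- `v` is the (measure-theoretic) outward unit normal to `Ω` at the boundary point `x`:
`v` is a unit vector, moving from `x` in any direction making a negative angle with `v`
eventually enters `Ω`, and moving in any direction making a positive angle with `v`
eventually leaves the closure of `Ω`. -/
def IsOutwardNormalAt {n : ℕ} (Ω : Set (EuclideanSpace ℝ (Fin n)))
    (x v : EuclideanSpace ℝ (Fin n)) : Prop :=
  ‖v‖ = 1 ∧ ∀ w : EuclideanSpace ℝ (Fin n),
    (⟪w, v⟫ < 0 → ∀ᶠ t in 𝓝[>] (0 : ℝ), x + t • w ∈ Ω) ∧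
    (0 < ⟪w, v⟫ → ∀ᶠ t in 𝓝[>] (0 : ℝ), x + t • w ∉ closure Ω)

/-- The first `n-1` coordinates of a point of `ℝⁿ`. -/
def firstCoords {n : ℕ} (x : EuclideanSpace ℝ (Fin n)) :
    EuclideanSpace ℝ (Fin (n - 1)) :=
  (WithLp.equiv 2 (∀ _ : Fin (n - 1), ℝ)).symm
    (fun i => x ⟨i.1, lt_of_lt_of_le i.2 (Nat.sub_le n 1)⟩)

/-- The last coordinate of a point of `ℝⁿ`. -/
def lastCoord {n : ℕ} (x : EuclideanSpace ℝ (Fin n)) : ℝ :=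
  if h : 0 < n then x ⟨n - 1, Nat.sub_lt h Nat.one_pos⟩ else 0

/-- An open set `Ω ⊆ ℝⁿ` has Lipschitz boundary if near every boundary point, after a rigid
motion taking the point to the origin, `Ω` coincides with the open region above the graph of
a Lipschitz function of the first `n-1` coordinates. -/
def HasLipschitzBoundary {n : ℕ} (Ω : Set (EuclideanSpace ℝ (Fin n))) : Prop :=
  ∀ p ∈ frontier Ω,
    ∃ (A : EuclideanSpace ℝ (Fin n) ≃ᵃⁱ[ℝ] EuclideanSpace ℝ (Fin n))
      (f : EuclideanSpace ℝ (Fin (n - 1)) → ℝ) (K : ℝ≥0)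
      (U : Set (EuclideanSpace ℝ (Fin n))),
      A p = 0 ∧ LipschitzWith K f ∧ IsOpen U ∧ p ∈ U ∧
      ∀ x ∈ U, (x ∈ Ω ↔ f (firstCoords (A x)) < lastCoord (A x))

set_option linter.unusedSectionVars false

section Graph

variable {E : Type*} [NormedAddCommGroup E] [InnerProductSpace ℝ E]

theorem l2prod_ext {v w : WithLp 2 (E × ℝ)} (h1 : v.fst = w.fst) (h2 : v.snd = w.snd) : v = w :=
  WithLp.ofLp_injective 2 (Prod.ext h1 h2)

/-- The graph parametrization `y ↦ (y, f y)` of a real function, with values in the `L²` product. -/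
def graphMap (f : E → ℝ) (y : E) : WithLp 2 (E × ℝ) := WithLp.toLp 2 (y, f y)

@[simp]
theorem graphMap_fst (f : E → ℝ) (y : E) : (graphMap f y).fst = y := rfl

@[simp]
theorem graphMap_snd (f : E → ℝ) (y : E) : (graphMap f y).snd = f y := rfl

theorem norm_l2prod_fst_le (v : WithLp 2 (E × ℝ)) : ‖v.fst‖ ≤ ‖v‖ := by
  rw [WithLp.prod_norm_eq_of_L2]
  exact Real.le_sqrt_of_sq_le (by nlinarith [sq_nonneg ‖v.snd‖])

theorem abs_l2prod_snd_le (v : WithLp 2 (E × ℝ)) : |v.snd| ≤ ‖v‖ := by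
  rw [WithLp.prod_norm_eq_of_L2]
  exact Real.le_sqrt_of_sq_le (by simp)

theorem lipschitzWith_graphMap {f : E → ℝ} {K : ℝ≥0} (hf : LipschitzWith K f) :
    LipschitzWith (1 + K) (graphMap f) := by
  refine LipschitzWith.of_dist_le_mul fun x y => ?_
  have h1 : graphMap f x - graphMap f y =
      WithLp.toLp 2 (x - y, (0 : ℝ)) + WithLp.toLp 2 ((0 : E), f x - f y) := by
    apply l2prod_ext <;> simp [graphMap]
  have h2 := hf.dist_le_mul x y
  rw [dist_eq_norm, dist_eq_norm] at *
  rw [h1]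
  refine (norm_add_le _ _).trans ?_
  simp only [WithLp.norm_toLp_fst, WithLp.norm_toLp_snd]
  push_cast
  linarith

theorem isClosedEmbedding_graphMap {f : E → ℝ} (hf : Continuous f) :
    Topology.IsClosedEmbedding (graphMap f) := by
  refine Topology.IsClosedEmbedding.of_continuous_injective_isClosedMap ?_ ?_ ?_
  · exact (WithLp.prod_continuous_toLp 2 E ℝ).comp (continuous_id.prodMk hf)
  · intro x y h
    simpa using congrArg WithLp.fst h
  · intro s hs
    have : graphMap f '' s = {v | v.fst ∈ s ∧ v.snd = f v.fst} := by
      ext v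
      constructor
      · rintro ⟨y, hy, rfl⟩
        exact ⟨hy, rfl⟩
      · rintro ⟨h1, h2⟩
        exact ⟨v.fst, h1, by apply l2prod_ext <;> simp [graphMap, h2]⟩
    rw [this]
    have c1 : Continuous fun v : WithLp 2 (E × ℝ) => v.fst :=
      continuous_fst.comp (WithLp.prod_continuous_ofLp 2 E ℝ)
    have c2 : Continuous fun v : WithLp 2 (E × ℝ) => v.snd :=
      continuous_snd.comp (WithLp.prod_continuous_ofLp 2 E ℝ)
    exact (hs.preimage c1).inter (isClosed_eq c2 (hf.comp c1))

variable [FiniteDimensional ℝ E] [MeasurableSpace E] [BorelSpace E]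

theorem hausdorffMeasure_graphMap_image_le {f g : E → ℝ} {t : Set E} {η : ℝ≥0} {d : ℝ} (hd : 0 ≤ d)
    (h : ∀ x ∈ t, ∀ y ∈ t, |(f x - f y) - (g x - g y)| ≤ η * ‖x - y‖) :
    μH[d] (graphMap f '' t) ≤ ((1 + η : ℝ≥0) : ℝ≥0∞) ^ d * μH[d] (graphMap g '' t) := by
  have himg : graphMap f '' t = (fun v : WithLp 2 (E × ℝ) => graphMap f v.fst) '' (graphMap g '' t) := by
    rw [Set.image_image]
    rfl
  rw [himg]
  refine LipschitzOnWith.hausdorffMeasure_image_le ?_ hd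
  refine LipschitzOnWith.of_dist_le_mul ?_
  rintro _ ⟨x, hx, rfl⟩ _ ⟨y, hy, rfl⟩
  have h1 : graphMap f x - graphMap f y = (graphMap g x - graphMap g y) +
      WithLp.toLp 2 ((0 : E), (f x - f y) - (g x - g y)) := by
    apply l2prod_ext <;> simp [graphMap]
  have h2 := h x hx y hy
  have h3 : ‖x - y‖ ≤ ‖graphMap g x - graphMap g y‖ := by
    simpa using norm_l2prod_fst_le (graphMap g x - graphMap g y)
  simp only [graphMap_fst, dist_eq_norm]
  rw [h1]
  refine (norm_add_le _ _).trans ?_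
  simp only [WithLp.norm_toLp_snd]
  push_cast
  rw [Real.norm_eq_abs]
  nlinarith [η.coe_nonneg]

/-- The area factor `√(1 + ‖L‖²)` of the graph of a linear functional. -/
def graphJacobian (L : E →L[ℝ] ℝ) : ℝ := √(1 + ‖L‖ ^ 2)

theorem one_le_graphJacobian (L : E →L[ℝ] ℝ) : 1 ≤ graphJacobian L := by
  rw [graphJacobian, Real.one_le_sqrt]
  nlinarith [sq_nonneg ‖L‖]

theorem graphJacobian_le_mul {L M : E →L[ℝ] ℝ} {η : ℝ} (h : ‖L - M‖ ≤ η) :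
    graphJacobian L ≤ (1 + η) * graphJacobian M := by
  have hη : 0 ≤ η := (norm_nonneg _).trans h
  have h1 : ‖L‖ ≤ ‖M‖ + η := by linarith [norm_le_norm_add_norm_sub' L M]
  have h2 := one_le_graphJacobian M
  suffices graphJacobian L ≤ graphJacobian M + η by nlinarith
  have h3 : graphJacobian M ^ 2 = 1 + ‖M‖ ^ 2 := Real.sq_sqrt (by positivity)
  have h4 : ‖M‖ ≤ graphJacobian M := Real.le_sqrt_of_sq_le (by linarith)
  refine Real.sqrt_le_iff.2 ⟨by linarith, ?_⟩
  nlinarith [norm_nonneg L, norm_nonneg M]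

theorem abs_det_of_norm_sq_eq (T : E →ₗ[ℝ] E) (L : E →L[ℝ] ℝ)
    (h : ∀ x, ‖T x‖ ^ 2 = ‖x‖ ^ 2 + (L x) ^ 2) : |LinearMap.det T| = graphJacobian L := by
  set a : E := (InnerProductSpace.toDual ℝ E).symm L
  have ha : ∀ x, L x = ⟪a, x⟫ := fun x => (InnerProductSpace.toDual_symm_apply).symm
  have hpol : ∀ x y, ⟪T x, T y⟫ = ⟪x, y⟫ + L x * L y := by
    intro x y
    have h1 := h (x + y)
    have h2 := h (x - y)
    rw [map_add, map_add, norm_add_sq_real, norm_add_sq_real] at h1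
    have h3 := h x
    have h4 := h y
    nlinarith
  have hadj : LinearMap.adjoint T ∘ₗ T = LinearMap.transvection (L : E →ₗ[ℝ] ℝ) a := by
    ext x
    refine ext_inner_right ℝ fun y => ?_
    rw [LinearMap.comp_apply, LinearMap.adjoint_inner_left, hpol]
    simp [LinearMap.transvection.apply, inner_add_left, inner_smul_left, ha]
  have hdet : LinearMap.det (LinearMap.adjoint T) = LinearMap.det T := by
    let b := stdOrthonormalBasis ℝ E
    rw [← LinearMap.det_toMatrix b.toBasis, ← LinearMap.det_toMatrix b.toBasis T,
      LinearMap.toMatrix_adjoint, Matrix.det_conjTranspose]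
    simp
  have h2 : LinearMap.det T ^ 2 = 1 + ‖L‖ ^ 2 := by
    have := congrArg LinearMap.det hadj
    rw [LinearMap.det_comp, hdet, LinearMap.transvection.det] at this
    have h5 : (L : E →ₗ[ℝ] ℝ) a = ‖L‖ ^ 2 := by
      change L a = _
      rw [ha, real_inner_self_eq_norm_sq]
      simp [a]
    rw [h5] at this
    rw [sq, this]
  rw [graphJacobian, ← h2, Real.sqrt_sq_eq_abs]

theorem hausdorffMeasure_graphMap_linear_image (L : E →L[ℝ] ℝ) (s : Set E) :
    μH[Module.finrank ℝ E] (graphMap L '' s) =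
      ENNReal.ofReal (graphJacobian L) * μH[Module.finrank ℝ E] s := by
  let Ψ : E →ₗ[ℝ] WithLp 2 (E × ℝ) :=
    { toFun := graphMap L
      map_add' := fun x y => by apply l2prod_ext <;> simp [graphMap]
      map_smul' := fun c x => by apply l2prod_ext <;> simp [graphMap] }
  have hΨ : Function.Injective Ψ := fun x y h => by
    simpa [Ψ] using congrArg WithLp.fst h
  let W := LinearMap.range Ψ
  have hW : Module.finrank ℝ W = Module.finrank ℝ E := LinearMap.finrank_range_of_inj hΨ
  let i : W ≃ₗᵢ[ℝ] E :=
    ((stdOrthonormalBasis ℝ W).reindex (finCongr hW)).equiv (stdOrthonormalBasis ℝ E) (Equiv.refl _)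
  let T : E →ₗ[ℝ] E := i.toLinearEquiv.toLinearMap ∘ₗ Ψ.rangeRestrict
  have hT : ∀ x, ‖T x‖ ^ 2 = ‖x‖ ^ 2 + (L x) ^ 2 := by
    intro x
    have : ‖T x‖ = ‖graphMap L x‖ := i.norm_map _
    rw [this, WithLp.prod_norm_sq_eq_of_L2]
    simp
  rw [← abs_det_of_norm_sq_eq T L hT, ← Measure.addHaar_image_linearMap]
  have e1 : T '' s = i '' (Ψ.rangeRestrict '' s) := by
    rw [Set.image_image]
    rfl
  have e2 : graphMap L '' s = W.subtypeₗᵢ '' (Ψ.rangeRestrict '' s) := by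
    rw [Set.image_image]
    rfl
  rw [e1, e2, i.isometry.hausdorffMeasure_image (Or.inl (by positivity)),
    W.subtypeₗᵢ.isometry.hausdorffMeasure_image (Or.inl (by positivity))]

end Graph

section Graph

variable {E : Type*} [NormedAddCommGroup E] [InnerProductSpace ℝ E]
variable [FiniteDimensional ℝ E] [MeasurableSpace E] [BorelSpace E]

theorem ae_norm_fderiv_sub_le [Nontrivial E] {f : E → ℝ} {L : E →L[ℝ] ℝ} {t : Set E} {η : ℝ≥0}
    (μ : Measure E) [μ.IsAddHaarMeasure]
    (hL : ApproximatesLinearOn f L t η) (ht : MeasurableSet t)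
    (hd : ∀ x ∈ t, DifferentiableAt ℝ f x) :
    ∀ᵐ x ∂μ.restrict t, ‖fderiv ℝ f x - L‖ ≤ η := by
  obtain ⟨e, he⟩ := exists_norm_eq E zero_le_one
  have h1 : ApproximatesLinearOn (fun y => f y • e) (L.smulRight e) t η := by
    intro x hx y hy
    have := hL x hx y hy
    rw [ContinuousLinearMap.smulRight_apply, ← sub_smul, ← sub_smul, norm_smul, he, mul_one]
    exact this
  have h2 := h1.norm_fderiv_sub_le μ ht (fun x => (fderiv ℝ f x).smulRight e) fun x hx =>
    ((hd x hx).hasFDerivAt.smul_const e).hasFDerivWithinAt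
  filter_upwards [h2] with x hx
  have h3 : (fderiv ℝ f x).smulRight e - L.smulRight e = (fderiv ℝ f x - L).smulRight e := by
    ext; simp [sub_smul]
  rw [h3] at hx
  have h4 : ‖(fderiv ℝ f x - L).smulRight e‖ ≤ η := by exact_mod_cast hx
  rwa [ContinuousLinearMap.norm_smulRight_apply, he, mul_one] at h4

theorem ApproximatesLinearOn.hausdorffMeasure_graphMap_bounds [Nontrivial E] {f : E → ℝ}
    {L : E →L[ℝ] ℝ} {t : Set E} {η : ℝ≥0}
    (hL : ApproximatesLinearOn f L t η) (ht : MeasurableSet t)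
    (hd : ∀ x ∈ t, DifferentiableAt ℝ f x) :
    μH[Module.finrank ℝ E] (graphMap f '' t) ≤ ((1 + η : ℝ≥0) : ℝ≥0∞) ^ (Module.finrank ℝ E + 1) *
      ∫⁻ y in t, ENNReal.ofReal (graphJacobian (fderiv ℝ f y)) ∂μH[Module.finrank ℝ E] ∧
    ∫⁻ y in t, ENNReal.ofReal (graphJacobian (fderiv ℝ f y)) ∂μH[Module.finrank ℝ E] ≤
      ((1 + η : ℝ≥0) : ℝ≥0∞) ^ (Module.finrank ℝ E + 1) *
        μH[Module.finrank ℝ E] (graphMap f '' t) := by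
  set d := Module.finrank ℝ E
  have hd0 : (0 : ℝ) ≤ (d : ℝ) := by positivity
  have hcl : ∀ x ∈ t, ∀ y ∈ t, |(f x - f y) - (L x - L y)| ≤ η * ‖x - y‖ := by
    intro x hx y hy
    simpa [map_sub] using hL x hx y hy
  have b1 := hausdorffMeasure_graphMap_image_le hd0 hcl
  have b2 := hausdorffMeasure_graphMap_image_le (f := L) (g := f) (t := t) hd0
    (fun x hx y hy => by rw [abs_sub_comm]; exact hcl x hx y hy)
  rw [hausdorffMeasure_graphMap_linear_image, ENNReal.rpow_natCast] at b1
  rw [hausdorffMeasure_graphMap_linear_image, ENNReal.rpow_natCast] at b2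
  have hae := ae_norm_fderiv_sub_le (μH[d]) hL ht hd
  have hη : ENNReal.ofReal (1 + η) = ((1 + η : ℝ≥0) : ℝ≥0∞) := by
    rw [← ENNReal.ofReal_coe_nnreal]; push_cast; rfl
  have c1 : ENNReal.ofReal (graphJacobian L) * μH[d] t ≤ ((1 + η : ℝ≥0) : ℝ≥0∞) *
      ∫⁻ y in t, ENNReal.ofReal (graphJacobian (fderiv ℝ f y)) ∂μH[d] := by
    rw [← lintegral_const_mul' _ _ ENNReal.coe_ne_top, ← setLIntegral_const]
    refine lintegral_mono_ae ?_
    filter_upwards [hae] with y hy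
    rw [← hη, ← ENNReal.ofReal_mul (by positivity)]
    exact ENNReal.ofReal_le_ofReal (graphJacobian_le_mul (by rwa [norm_sub_rev]))
  have c2 : ∫⁻ y in t, ENNReal.ofReal (graphJacobian (fderiv ℝ f y)) ∂μH[d] ≤
      ((1 + η : ℝ≥0) : ℝ≥0∞) * (ENNReal.ofReal (graphJacobian L) * μH[d] t) := by
    rw [← mul_assoc, ← setLIntegral_const]
    refine lintegral_mono_ae ?_
    filter_upwards [hae] with y hy
    rw [← hη, ← ENNReal.ofReal_mul (by positivity)]
    exact ENNReal.ofReal_le_ofReal (graphJacobian_le_mul hy)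
  constructor
  · refine b1.trans ?_
    rw [pow_succ, mul_assoc]
    gcongr
  · refine c2.trans ?_
    rw [pow_succ', mul_assoc]
    gcongr

/-- **Area formula** for the graph of a Lipschitz function. -/
theorem hausdorffMeasure_graphMap_image [Nontrivial E] {f : E → ℝ} {K : ℝ≥0}
    (hf : LipschitzWith K f) {s : Set E} (hs : MeasurableSet s) :
    μH[Module.finrank ℝ E] (graphMap f '' s) =
      ∫⁻ y in s, ENNReal.ofReal (graphJacobian (fderiv ℝ f y)) ∂μH[Module.finrank ℝ E] := by
  set d := Module.finrank ℝ E
  let D := {y | DifferentiableAt ℝ f y}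
  have hD : MeasurableSet D := measurableSet_of_differentiableAt ℝ f
  have hDc : μH[d] Dᶜ = 0 := hf.ae_differentiableAt
  have hemb := (isClosedEmbedding_graphMap hf.continuous).measurableEmbedding
  have hnull : μH[d] (graphMap f '' (s \ D)) = 0 := by
    refine le_antisymm ?_ bot_le
    refine ((lipschitzWith_graphMap hf).hausdorffMeasure_image_le (by positivity) _).trans ?_
    rw [measure_mono_null (fun x hx => hx.2) hDc, mul_zero]
  have hL : μH[d] (graphMap f '' s) = μH[d] (graphMap f '' (s ∩ D)) := by
    refine le_antisymm ?_ (measure_mono (Set.image_mono Set.inter_subset_left))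
    rw [← Set.inter_union_sdiff s D, Set.image_union]
    refine (measure_union_le _ _).trans ?_
    rw [hnull, add_zero, Set.inter_union_sdiff s D]
  have hR : ∫⁻ y in s, ENNReal.ofReal (graphJacobian (fderiv ℝ f y)) ∂μH[d] =
      ∫⁻ y in s ∩ D, ENNReal.ofReal (graphJacobian (fderiv ℝ f y)) ∂μH[d] := by
    refine setLIntegral_congr ?_
    exact (Filter.eventuallyEq_set.2 (by
      filter_upwards [compl_mem_ae_iff.2 hDc] with x hx
      simp only [Set.mem_inter_iff]
      simp at hx
      tauto))
  rw [hL, hR]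
  have key : ∀ η : ℝ≥0, η ≠ 0 →
      μH[d] (graphMap f '' (s ∩ D)) ≤ ((1 + η : ℝ≥0) : ℝ≥0∞) ^ (d + 1) *
        ∫⁻ y in s ∩ D, ENNReal.ofReal (graphJacobian (fderiv ℝ f y)) ∂μH[d] ∧
      ∫⁻ y in s ∩ D, ENNReal.ofReal (graphJacobian (fderiv ℝ f y)) ∂μH[d] ≤
        ((1 + η : ℝ≥0) : ℝ≥0∞) ^ (d + 1) * μH[d] (graphMap f '' (s ∩ D)) := by
    intro η hη
    obtain ⟨t, A, hdisj, htm, hcov, happ, -⟩ :=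
      exists_partition_approximatesLinearOn_of_hasFDerivWithinAt f (s ∩ D) (fderiv ℝ f)
        (fun x hx => (show DifferentiableAt ℝ f x from hx.2).hasFDerivAt.hasFDerivWithinAt)
        (fun _ => η) (fun _ => hη)
    have hmeas : ∀ k, MeasurableSet (s ∩ D ∩ t k) := fun k => (hs.inter hD).inter (htm k)
    have hU : s ∩ D = ⋃ k, s ∩ D ∩ t k := by
      rw [← Set.inter_iUnion, Set.inter_eq_left.2 hcov]
    have hdisj' : Pairwise (Function.onFun Disjoint fun k => s ∩ D ∩ t k) := fun i j hij =>
      (hdisj hij).mono Set.inter_subset_right Set.inter_subset_right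
    have e1 : μH[d] (graphMap f '' (s ∩ D)) = ∑' k, μH[d] (graphMap f '' (s ∩ D ∩ t k)) := by
      conv_lhs => rw [hU, Set.image_iUnion]
      refine measure_iUnion ?_ fun k => hemb.measurableSet_image.2 (hmeas k)
      exact fun i j hij => (Set.disjoint_image_iff hemb.injective).2 (hdisj' hij)
    have e2 : ∫⁻ y in s ∩ D, ENNReal.ofReal (graphJacobian (fderiv ℝ f y)) ∂μH[d] =
        ∑' k, ∫⁻ y in s ∩ D ∩ t k, ENNReal.ofReal (graphJacobian (fderiv ℝ f y)) ∂μH[d] := by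
      conv_lhs => rw [hU]
      exact lintegral_iUnion hmeas hdisj' _
    have hb := fun k => (happ k).hausdorffMeasure_graphMap_bounds (hmeas k) (fun x hx => hx.1.2)
    rw [e1, e2, ← ENNReal.tsum_mul_left, ← ENNReal.tsum_mul_left]
    exact ⟨ENNReal.tsum_le_tsum fun k => (hb k).1, ENNReal.tsum_le_tsum fun k => (hb k).2⟩
  have lim : ∀ a : ℝ≥0∞, Tendsto (fun η : ℝ≥0 => ((1 + η : ℝ≥0) : ℝ≥0∞) ^ (d + 1) * a)
      (𝓝[≠] 0) (𝓝 a) := by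
    intro a
    have h1 : Tendsto (fun η : ℝ≥0 => (((1 + η) ^ (d + 1) : ℝ≥0) : ℝ≥0∞)) (𝓝[≠] 0)
        (𝓝 (((1 + 0) ^ (d + 1) : ℝ≥0) : ℝ≥0∞)) := by
      refine ENNReal.tendsto_coe.2 (Tendsto.mono_left ?_ nhdsWithin_le_nhds)
      exact (Continuous.tendsto (by fun_prop) 0)
    have h2 := ENNReal.Tendsto.mul_const h1 (b := a) (Or.inl (by simp))
    simpa using h2
  refine le_antisymm (ge_of_tendsto (lim _) ?_) (ge_of_tendsto (lim _) ?_)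
  · filter_upwards [self_mem_nhdsWithin] with η hη using (key η hη).1
  · filter_upwards [self_mem_nhdsWithin] with η hη using (key η hη).2

end Graph

section UniformlyDistributed

variable {X : Type*} [MetricSpace X] [CompactSpace X] [MeasurableSpace X] [BorelSpace X]

theorem integral_mul_eq_of_uniformly_distributed (μ ν : Measure X) [IsFiniteMeasure μ]
    [IsFiniteMeasure ν] {g h : ℝ → ℝ} (hμ : ∀ x, ∀ r > 0, μ.real (ball x r) = g r)
    (hν : ∀ x, ∀ r > 0, ν.real (ball x r) = h r) (hpos : ∀ r > 0, 0 < h r)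
    {f : X → ℝ} (hf : Continuous f) :
    ν.real Set.univ * ∫ x, f x ∂μ = μ.real Set.univ * ∫ x, f x ∂ν := by
  have hint : ∀ (ρ : Measure X) [IsFiniteMeasure ρ], Integrable f ρ := fun ρ _ =>
    (BoundedContinuousFunction.mkOfCompact ⟨f, hf⟩).integrable ρ
  let k : ℝ → X × X → ℝ := fun r => Set.indicator {z | dist z.1 z.2 < r} 1
  have hkm : ∀ r, MeasurableSet {z : X × X | dist z.1 z.2 < r} := fun r =>
    (isOpen_lt (by fun_prop) (by fun_prop)).measurableSet
  have hk1 : ∀ r x y, k r (x, y) = Set.indicator (ball x r) 1 y := by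
    intro r x y
    classical
    simp only [k, Set.indicator_apply, Set.mem_ofPred_eq, mem_ball, dist_comm, Pi.one_apply]
  have hk2 : ∀ r x y, k r (x, y) = Set.indicator (ball y r) 1 x := by
    intro r x y
    classical
    simp only [k, Set.indicator_apply, Set.mem_ofPred_eq, mem_ball, Pi.one_apply]
  have hI1 : ∀ r (u : X × X → ℝ), Integrable u (μ.prod ν) →
      Integrable (fun z => k r z * u z) (μ.prod ν) := by
    intro r u hu
    have : (fun z => k r z * u z) = Set.indicator {z : X × X | dist z.1 z.2 < r} u := by
      ext z
      simp only [k, Set.indicator_apply]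
      split_ifs <;> simp
    rw [this]
    exact hu.indicator (hkm r)
  have hf1 : Integrable (fun z : X × X => f z.1) (μ.prod ν) := (hint μ).comp_fst ν
  have hf2 : Integrable (fun z : X × X => f z.2) (μ.prod ν) := (hint ν).comp_snd μ
  have P1 : ∀ r > 0, ∀ u : X → ℝ, Integrable u μ →
      ∫ z, k r z * u z.1 ∂(μ.prod ν) = h r * ∫ x, u x ∂μ := by
    intro r hr u hu
    rw [integral_prod _ (hI1 r _ (hu.comp_fst ν)), ← integral_const_mul]
    congr 1 with x
    dsimp only
    rw [integral_mul_const]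
    congr 1
    simp_rw [hk1]
    rw [integral_indicator_one measurableSet_ball, hν x r hr]
  have P2 : ∀ r > 0, ∀ u : X → ℝ, Integrable u ν →
      ∫ z, k r z * u z.2 ∂(μ.prod ν) = g r * ∫ x, u x ∂ν := by
    intro r hr u hu
    rw [integral_prod_symm _ (hI1 r _ (hu.comp_snd μ)), ← integral_const_mul]
    congr 1 with x
    dsimp only
    rw [integral_mul_const]
    congr 1
    simp_rw [hk2]
    rw [integral_indicator_one measurableSet_ball, hμ x r hr]
  have hmass : ∀ r > 0, h r * μ.real Set.univ = g r * ν.real Set.univ := by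
    intro r hr
    have h1 := P1 r hr (fun _ => 1) (integrable_const 1)
    have h2 := P2 r hr (fun _ => 1) (integrable_const 1)
    simp only [integral_const, smul_eq_mul, mul_one] at h1 h2
    rw [← h1, ← h2]
  have hest : ∀ η > 0, |ν.real Set.univ * ∫ x, f x ∂μ - μ.real Set.univ * ∫ x, f x ∂ν| ≤
      η * (μ.real Set.univ * ν.real Set.univ) := by
    intro η hη
    obtain ⟨r, hr, hfr⟩ := Metric.uniformContinuous_iff.1
      (CompactSpace.uniformContinuous_of_continuous hf) η hη
    have hdiff : h r * ∫ x, f x ∂μ - g r * ∫ x, f x ∂ν =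
        ∫ z, k r z * (f z.1 - f z.2) ∂(μ.prod ν) := by
      rw [← P1 r hr f (hint μ), ← P2 r hr f (hint ν), ← integral_sub (hI1 r _ hf1) (hI1 r _ hf2)]
      simp_rw [mul_sub]
    have hb : |h r * ∫ x, f x ∂μ - g r * ∫ x, f x ∂ν| ≤ η * (h r * μ.real Set.univ) := by
      rw [hdiff, ← Real.norm_eq_abs]
      refine (norm_integral_le_integral_norm _).trans ?_
      have h1 := P1 r hr (fun _ => η) (integrable_const η)
      rw [integral_const, smul_eq_mul] at h1
      rw [show η * (h r * μ.real Set.univ) = h r * (μ.real Set.univ * η) by ring, ← h1]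
      refine integral_mono (hI1 r _ (hf1.sub hf2)).norm (hI1 r _ (integrable_const η)) ?_
      rintro ⟨x, y⟩
      simp only [k, Set.indicator_apply, Set.mem_ofPred_eq, Pi.one_apply]
      split_ifs with hxy
      · have := (hfr hxy).le
        rw [Real.dist_eq] at this
        simpa using this
      · simp
    have e : h r * (ν.real Set.univ * ∫ x, f x ∂μ - μ.real Set.univ * ∫ x, f x ∂ν) =
        ν.real Set.univ * (h r * ∫ x, f x ∂μ - g r * ∫ x, f x ∂ν) := by
      linear_combination (-∫ x, f x ∂ν) * hmass r hr
    have hp := hpos r hr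
    refine le_of_mul_le_mul_left ?_ hp
    calc h r * |ν.real Set.univ * ∫ x, f x ∂μ - μ.real Set.univ * ∫ x, f x ∂ν|
        = ν.real Set.univ * |h r * ∫ x, f x ∂μ - g r * ∫ x, f x ∂ν| := by
          rw [← abs_of_pos hp, ← abs_mul, abs_of_pos hp, e, abs_mul,
            abs_of_nonneg measureReal_nonneg]
      _ ≤ ν.real Set.univ * (η * (h r * μ.real Set.univ)) := by gcongr
      _ = h r * (η * (μ.real Set.univ * ν.real Set.univ)) := by ring
  have hlim : Tendsto (fun η : ℝ => η * (μ.real Set.univ * ν.real Set.univ)) (𝓝[>] 0) (𝓝 0) := by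
    have : Tendsto (fun η : ℝ => η * (μ.real Set.univ * ν.real Set.univ)) (𝓝 0)
        (𝓝 (0 * (μ.real Set.univ * ν.real Set.univ))) := tendsto_id.mul_const _
    rw [zero_mul] at this
    exact this.mono_left nhdsWithin_le_nhds
  have := ge_of_tendsto hlim (by filter_upwards [self_mem_nhdsWithin] with η hη using hest η hη)
  exact sub_eq_zero.1 (abs_nonpos_iff.1 this)

/-- Two finite measures on a compact metric space for which the measure of a ball depends only
on its radius are proportional. -/
theorem measure_smul_eq_of_uniformly_distributed (μ ν : Measure X) [IsFiniteMeasure μ]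
    [IsFiniteMeasure ν] {g h : ℝ → ℝ} (hμ : ∀ x, ∀ r > 0, μ.real (ball x r) = g r)
    (hν : ∀ x, ∀ r > 0, ν.real (ball x r) = h r) (hpos : ∀ r > 0, 0 < h r) (s : Set X) :
    ν.real Set.univ * μ.real s = μ.real Set.univ * ν.real s := by
  have key : (ν Set.univ).toNNReal • μ = (μ Set.univ).toNNReal • ν := by
    refine ext_of_forall_integral_eq_of_IsFiniteMeasure fun f => ?_
    rw [integral_smul_nnreal_measure, integral_smul_nnreal_measure]
    exact integral_mul_eq_of_uniformly_distributed μ ν hμ hν hpos f.continuous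
  have := congrArg (fun m : Measure X => m.real s) key
  simp only [measureReal_nnreal_smul_apply] at this
  exact this

end UniformlyDistributed

section SphereMeasure

open scoped Pointwise

variable {E : Type*} [NormedAddCommGroup E] [InnerProductSpace ℝ E]
variable [FiniteDimensional ℝ E] [MeasurableSpace E] [BorelSpace E]

theorem exists_linearIsometryEquiv_map_eq {F : Type*} [NormedAddCommGroup F]
    [InnerProductSpace ℝ F] {x y : F} (h : ‖x‖ = ‖y‖) : ∃ R : F ≃ₗᵢ[ℝ] F, R x = y :=
  ⟨_, Submodule.reflection_sub h⟩

theorem image_sphere_inter_ball {F : Type*} [NormedAddCommGroup F]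
    [InnerProductSpace ℝ F] (R : F ≃ₗᵢ[ℝ] F) (x : F) (r : ℝ) :
    R '' (sphere 0 1 ∩ ball x r) = sphere 0 1 ∩ ball (R x) r := by
  rw [Set.image_inter R.injective, R.image_sphere, R.image_ball, map_zero]

theorem sphere_hausdorffMeasure_lt_top :
    μH[Module.finrank ℝ E] (sphere (0 : WithLp 2 (E × ℝ)) 1) < ∞ := by
  set d := Module.finrank ℝ E
  let e : WithLp 2 (E × ℝ) := WithLp.toLp 2 (0, 1)
  have he : ‖e‖ = 1 := by simp [e]
  let Q : E → WithLp 2 (E × ℝ) := fun y => WithLp.toLp 2 (y, √(1 - ‖y‖ ^ 2))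
  have hQ : ContDiffAt ℝ 1 Q 0 := by
    have h1 : ContDiffAt ℝ 1 (fun y : E => (y, √(1 - ‖y‖ ^ 2))) 0 := by
      refine contDiffAt_id.prodMk (ContDiffAt.sqrt ?_ (by simp))
      exact contDiffAt_const.sub (contDiff_norm_sq ℝ).contDiffAt
    exact (WithLp.prodContinuousLinearEquiv 2 ℝ E ℝ).symm.contDiff.contDiffAt.comp 0 h1
  obtain ⟨K, t, ht, hK⟩ := hQ.exists_lipschitzOnWith
  have c1 : Continuous fun v : WithLp 2 (E × ℝ) => v.fst :=
    continuous_fst.comp (WithLp.prod_continuous_ofLp 2 E ℝ)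
  have c2 : Continuous fun v : WithLp 2 (E × ℝ) => v.snd :=
    continuous_snd.comp (WithLp.prod_continuous_ofLp 2 E ℝ)
  let N : Set (WithLp 2 (E × ℝ)) := {v | v.fst ∈ t ∩ ball 0 1 ∧ 0 < v.snd}
  have hN : N ∈ 𝓝 e := by
    refine inter_mem (c1.continuousAt.preimage_mem_nhds (x := e) ?_)
      (c2.continuousAt.preimage_mem_nhds (x := e) (Ioi_mem_nhds (by simp [e])))
    exact inter_mem ht (ball_mem_nhds _ one_pos)
  have hNfin : μH[d] (sphere 0 1 ∩ N) < ∞ := by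
    have hsub : sphere 0 1 ∩ N ⊆ Q '' (t ∩ ball 0 1) := by
      rintro v ⟨hv, hv1, hv2⟩
      refine ⟨v.fst, hv1, l2prod_ext rfl ?_⟩
      have h1 : ‖v‖ ^ 2 = 1 := by rw [mem_sphere_zero_iff_norm.1 hv, one_pow]
      rw [WithLp.prod_norm_sq_eq_of_L2, Real.norm_eq_abs, sq_abs] at h1
      change √(1 - ‖v.fst‖ ^ 2) = v.snd
      rw [← h1, add_sub_cancel_left, Real.sqrt_sq hv2.le]
    refine (measure_mono hsub).trans_lt ?_
    refine ((hK.mono Set.inter_subset_left).hausdorffMeasure_image_le (by positivity)).trans_lt ?_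
    refine ENNReal.mul_lt_top (ENNReal.rpow_lt_top_of_nonneg (by positivity) ENNReal.coe_ne_top) ?_
    exact (measure_mono Set.inter_subset_right).trans_lt measure_ball_lt_top
  refine (isCompact_sphere _ _).measure_lt_top_of_nhdsWithin fun x hx => ?_
  obtain ⟨R, hR⟩ := exists_linearIsometryEquiv_map_eq
    (show ‖x‖ = ‖e‖ by rw [he, mem_sphere_zero_iff_norm.1 hx])
  refine ⟨sphere 0 1 ∩ R ⁻¹' N, inter_mem self_mem_nhdsWithin
    (mem_nhdsWithin_of_mem_nhds (R.continuous.continuousAt.preimage_mem_nhds (by rwa [hR]))), ?_⟩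
  have : sphere 0 1 ∩ R ⁻¹' N = R ⁻¹' (sphere 0 1 ∩ N) := by
    ext v
    simp
  rw [this]
  have h3 := R.toIsometryEquiv.hausdorffMeasure_preimage d (sphere 0 1 ∩ N)
  exact (h3.trans_lt hNfin)

theorem sphere_hausdorffMeasure_pos :
    0 < μH[Module.finrank ℝ E] (sphere (0 : WithLp 2 (E × ℝ)) 1) := by
  set d := Module.finrank ℝ E
  have hL : LipschitzWith 1 fun v : WithLp 2 (E × ℝ) => v.fst := by
    refine LipschitzWith.of_dist_le_mul fun v w => ?_
    rw [NNReal.coe_one, one_mul, dist_eq_norm, dist_eq_norm]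
    exact norm_l2prod_fst_le (v - w)
  have hsub : ball (0 : E) 1 ⊆ (fun v : WithLp 2 (E × ℝ) => v.fst) '' sphere 0 1 := by
    intro y hy
    refine ⟨WithLp.toLp 2 (y, √(1 - ‖y‖ ^ 2)), ?_, rfl⟩
    have hy1 : ‖y‖ < 1 := by simpa using hy
    rw [mem_sphere_zero_iff_norm, WithLp.prod_norm_eq_of_L2]
    simp only [WithLp.toLp_fst, WithLp.toLp_snd, Real.norm_eq_abs, sq_abs]
    rw [Real.sq_sqrt (by nlinarith [norm_nonneg y])]
    simp
  have h1 := hL.hausdorffMeasure_image_le (d := d) (by positivity) (sphere 0 1)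
  rw [ENNReal.coe_one, ENNReal.one_rpow, one_mul] at h1
  exact (measure_ball_pos _ _ one_pos).trans_le ((measure_mono hsub).trans h1)

theorem image_val_ball_sphere {X : Type*} [PseudoMetricSpace X] {c : X} {R : ℝ} (z : sphere c R)
    (r : ℝ) : Subtype.val '' ball z r = sphere c R ∩ ball (z : X) r :=
  Subtype.image_preimage_val (sphere c R) (ball (z : X) r)

theorem toSphere_real_ball_eq {F : Type*} [NormedAddCommGroup F] [InnerProductSpace ℝ F]
    [FiniteDimensional ℝ F] [MeasurableSpace F] [BorelSpace F] (x y : sphere (0 : F) 1) (r : ℝ) :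
    (volume : Measure F).toSphere.real (ball x r) = (volume : Measure F).toSphere.real (ball y r) := by
  obtain ⟨R, hR⟩ := exists_linearIsometryEquiv_map_eq
    (show ‖(x : F)‖ = ‖(y : F)‖ by rw [norm_eq_of_mem_sphere, norm_eq_of_mem_sphere])
  simp only [measureReal_def]
  rw [Measure.toSphere_apply' _ measurableSet_ball, Measure.toSphere_apply' _ measurableSet_ball,
    image_val_ball_sphere, image_val_ball_sphere, ← hR, ← image_sphere_inter_ball]
  congr 2
  have : Set.Ioo (0 : ℝ) 1 • (R '' (sphere 0 1 ∩ ball (x : F) r)) =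
      R.symm ⁻¹' (Set.Ioo (0 : ℝ) 1 • (sphere 0 1 ∩ ball (x : F) r)) := by
    rw [← LinearIsometryEquiv.image_eq_preimage_symm]
    ext w
    constructor
    · rintro ⟨a, ha, _, ⟨v, hv, rfl⟩, rfl⟩
      exact ⟨a • v, ⟨a, ha, v, hv, rfl⟩, by simp⟩
    · rintro ⟨_, ⟨a, ha, v, hv, rfl⟩, rfl⟩
      exact ⟨a, ha, R v, ⟨v, hv, rfl⟩, by simp⟩
  rw [this, R.symm.measurePreserving.measure_preimage_emb
    R.symm.toHomeomorph.measurableEmbedding]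

/-- The normalized Hausdorff measure of a slice of a set by a sphere agrees with the normalized
measure `MeasureTheory.Measure.toSphere` of the rescaled slice. -/
theorem hausdorffMeasure_sphere_ratio (Ω : Set (WithLp 2 (E × ℝ))) {t : ℝ} (ht : 0 < t) :
    (μH[Module.finrank ℝ E] (Ω ∩ sphere 0 t)).toReal /
        (μH[Module.finrank ℝ E] (sphere (0 : WithLp 2 (E × ℝ)) t)).toReal =
      (volume : Measure (WithLp 2 (E × ℝ))).toSphere.real {θ | t • (θ : WithLp 2 (E × ℝ)) ∈ Ω} /
        (volume : Measure (WithLp 2 (E × ℝ))).toSphere.real Set.univ := by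
  set d := Module.finrank ℝ E
  set τ := (volume : Measure (WithLp 2 (E × ℝ))).toSphere
  let σ : Measure (sphere (0 : WithLp 2 (E × ℝ)) 1) := μH[d]
  have hσ : ∀ s, σ s = μH[d] (Subtype.val '' s) := fun s =>
    (isometry_subtype_coe.hausdorffMeasure_image (Or.inl (by positivity)) s).symm
  have hσu : σ Set.univ = μH[d] (sphere (0 : WithLp 2 (E × ℝ)) 1) := by
    rw [hσ, Set.image_univ, Subtype.range_coe]
  have : IsFiniteMeasure σ := ⟨by rw [hσu]; exact sphere_hausdorffMeasure_lt_top⟩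
  have hσpos : 0 < σ.real Set.univ := by
    rw [measureReal_def, hσu]
    exact ENNReal.toReal_pos sphere_hausdorffMeasure_pos.ne' sphere_hausdorffMeasure_lt_top.ne
  have hscale : ∀ A : Set (WithLp 2 (E × ℝ)), (μH[d] (A ∩ sphere 0 t)).toReal =
      t ^ (d : ℝ) * σ.real {θ | t • (θ : WithLp 2 (E × ℝ)) ∈ A} := by
    intro A
    have hA : A ∩ sphere 0 t =
        t • (Subtype.val '' {θ : sphere (0 : WithLp 2 (E × ℝ)) 1 | t • (θ : WithLp 2 (E × ℝ)) ∈ A}) := by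
      ext v
      constructor
      · rintro ⟨h1, h2⟩
        have h2' : ‖v‖ = t := by simpa using h2
        have h3 : t • (t⁻¹ • v) = v := by rw [smul_smul, mul_inv_cancel₀ ht.ne', one_smul]
        refine ⟨t⁻¹ • v, ⟨⟨t⁻¹ • v, ?_⟩, ?_, rfl⟩, h3⟩
        · rw [mem_sphere_zero_iff_norm, norm_smul, h2', norm_inv, Real.norm_of_nonneg ht.le,
            inv_mul_cancel₀ ht.ne']
        · change t • (t⁻¹ • v) ∈ A
          rwa [h3]
      · rintro ⟨_, ⟨θ, hθ, rfl⟩, rfl⟩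
        refine ⟨hθ, ?_⟩
        change t • (θ : WithLp 2 (E × ℝ)) ∈ _
        rw [mem_sphere_zero_iff_norm, norm_smul, norm_eq_of_mem_sphere, mul_one,
          Real.norm_of_nonneg ht.le]
    rw [hA, Measure.hausdorffMeasure_smul₀ (by positivity) ht.ne', ← hσ, ENNReal.smul_def,
      smul_eq_mul, ENNReal.toReal_mul, measureReal_def]
    congr 1
    rw [ENNReal.coe_toReal]
    push_cast
    rw [Real.norm_of_nonneg ht.le]
  have hne : Nonempty (sphere (0 : WithLp 2 (E × ℝ)) 1) := by
    by_contra hcon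
    rw [not_nonempty_iff] at hcon
    rw [Set.univ_eq_empty_iff.2 hcon] at hσpos
    simp at hσpos
  obtain ⟨e⟩ := hne
  have hτ : ∀ r > 0, 0 < τ.real (ball e r) := fun r hr =>
    ENNReal.toReal_pos (measure_ball_pos _ _ hr).ne' (measure_ne_top _ _)
  have hball : ∀ x, ∀ r > 0, σ.real (ball x r) = σ.real (ball e r) := by
    intro x r _
    obtain ⟨R, hR⟩ := exists_linearIsometryEquiv_map_eq
      (show ‖(x : WithLp 2 (E × ℝ))‖ = ‖(e : WithLp 2 (E × ℝ))‖ by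
        rw [norm_eq_of_mem_sphere, norm_eq_of_mem_sphere])
    rw [measureReal_def, measureReal_def, hσ, hσ, image_val_ball_sphere,
      image_val_ball_sphere, ← hR, ← image_sphere_inter_ball,
      R.isometry.hausdorffMeasure_image (Or.inl (by positivity))]
  have key := measure_smul_eq_of_uniformly_distributed σ τ hball
    (fun x r _ => toSphere_real_ball_eq x e r) hτ {θ | t • (θ : WithLp 2 (E × ℝ)) ∈ Ω}
  have hτu : 0 < τ.real Set.univ :=
    (hτ 1 one_pos).trans_le (measureReal_mono (Set.subset_univ _))
  have h2 : (μH[d] (sphere (0 : WithLp 2 (E × ℝ)) t)).toReal = t ^ (d : ℝ) * σ.real Set.univ := by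
    have := hscale Set.univ
    simpa using this
  rw [hscale, h2, mul_div_mul_left _ _ (Real.rpow_pos_of_pos ht _).ne']
  rw [div_eq_div_iff hσpos.ne' hτu.ne']
  linarith

end SphereMeasure

section GraphIntegral

variable {E : Type*} [NormedAddCommGroup E] [InnerProductSpace ℝ E] [FiniteDimensional ℝ E]
  [MeasurableSpace E] [BorelSpace E]

theorem measurable_graphJacobian_fderiv (f : E → ℝ) :
    Measurable fun y => graphJacobian (fderiv ℝ f y) := by
  have h : Continuous fun L : E →L[ℝ] ℝ => graphJacobian L := by
    unfold graphJacobian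
    fun_prop
  exact h.measurable.comp (measurable_fderiv ℝ f)

theorem hausdorffMeasure_restrict_range_graphMap [Nontrivial E] {f : E → ℝ} {K : ℝ≥0}
    (hf : LipschitzWith K f) :
    (μH[Module.finrank ℝ E] : Measure (WithLp 2 (E × ℝ))).restrict (Set.range (graphMap f)) =
      ((μH[Module.finrank ℝ E] : Measure E).withDensity
        fun y => ENNReal.ofReal (graphJacobian (fderiv ℝ f y))).map (graphMap f) := by
  have he := (isClosedEmbedding_graphMap hf.continuous).measurableEmbedding
  ext B hB
  rw [Measure.restrict_apply hB, he.map_apply, withDensity_apply _ (he.measurable hB),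
    ← hausdorffMeasure_graphMap_image hf (he.measurable hB), Set.image_preimage_eq_inter_range]

theorem setIntegral_graph [Nontrivial E] {f : E → ℝ} {K : ℝ≥0} (hf : LipschitzWith K f)
    {B : Set (WithLp 2 (E × ℝ))} (hB : MeasurableSet B) (F : WithLp 2 (E × ℝ) → ℝ) :
    ∫ x in Set.range (graphMap f) ∩ B, F x ∂μH[Module.finrank ℝ E] =
      ∫ y in graphMap f ⁻¹' B, graphJacobian (fderiv ℝ f y) * F (graphMap f y)
        ∂μH[Module.finrank ℝ E] := by
  have he := (isClosedEmbedding_graphMap hf.continuous).measurableEmbedding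
  rw [Set.inter_comm, ← Measure.restrict_restrict hB, hausdorffMeasure_restrict_range_graphMap hf,
    he.restrict_map, he.integral_map, restrict_withDensity (he.measurable hB),
    integral_withDensity_eq_integral_toReal_smul
      (measurable_graphJacobian_fderiv f).ennreal_ofReal (by simp)]
  refine integral_congr_ae (.of_forall fun y => ?_)
  simp [ENNReal.toReal_ofReal (zero_le_one.trans (one_le_graphJacobian _))]

theorem integrableOn_graph_iff [Nontrivial E] {f : E → ℝ} {K : ℝ≥0} (hf : LipschitzWith K f)
    {B : Set (WithLp 2 (E × ℝ))} (hB : MeasurableSet B) (F : WithLp 2 (E × ℝ) → ℝ) :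
    IntegrableOn F (Set.range (graphMap f) ∩ B) μH[Module.finrank ℝ E] ↔
      IntegrableOn (fun y => graphJacobian (fderiv ℝ f y) * F (graphMap f y))
        (graphMap f ⁻¹' B) μH[Module.finrank ℝ E] := by
  have he := (isClosedEmbedding_graphMap hf.continuous).measurableEmbedding
  rw [IntegrableOn, Set.inter_comm, ← Measure.restrict_restrict hB,
    hausdorffMeasure_restrict_range_graphMap hf,
    he.restrict_map, he.integrable_map_iff, restrict_withDensity (he.measurable hB),
    integrable_withDensity_iff_integrable_smul'
      (measurable_graphJacobian_fderiv f).ennreal_ofReal (by simp)]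
  refine integrable_congr (.of_forall fun y => ?_)
  simp [ENNReal.toReal_ofReal (zero_le_one.trans (one_le_graphJacobian _))]

theorem ae_graph_iff [Nontrivial E] {f : E → ℝ} {K : ℝ≥0} (hf : LipschitzWith K f)
    {p : WithLp 2 (E × ℝ) → Prop} :
    (∀ᵐ x ∂(μH[Module.finrank ℝ E] : Measure (WithLp 2 (E × ℝ))).restrict
      (Set.range (graphMap f)), p x) ↔
      ∀ᵐ y ∂(μH[Module.finrank ℝ E] : Measure E), p (graphMap f y) := by
  have he := (isClosedEmbedding_graphMap hf.continuous).measurableEmbedding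
  rw [hausdorffMeasure_restrict_range_graphMap hf, he.ae_map_iff,
    ae_withDensity_iff (measurable_graphJacobian_fderiv f).ennreal_ofReal]
  refine eventually_congr (.of_forall fun y => ?_)
  have : ENNReal.ofReal (graphJacobian (fderiv ℝ f y)) ≠ 0 := by
    have := one_le_graphJacobian (fderiv ℝ f y)
    simp; linarith
  simp [this]

/-- At a point where `f` is differentiable, the outward normal `v` to the supergraph of `f`
satisfies the weighted identity `√(1+|∇f|²) ⟪(y, f y), v⟫ = Df(y) y - f y`. -/
theorem graphJacobian_mul_inner_normal {f : E → ℝ} {y : E} (hf : DifferentiableAt ℝ f y)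
    {G : Set (WithLp 2 (E × ℝ))}
    (hG : ∀ᶠ x in 𝓝 (graphMap f y), x ∈ G → f x.fst < x.snd)
    {v : WithLp 2 (E × ℝ)} (hv : ‖v‖ = 1)
    (hin : ∀ w : WithLp 2 (E × ℝ), ⟪w, v⟫ < 0 →
      ∀ᶠ t in 𝓝[>] (0 : ℝ), graphMap f y + t • w ∈ G) :
    graphJacobian (fderiv ℝ f y) * ⟪graphMap f y, v⟫ = fderiv ℝ f y y - f y := by
  set L := fderiv ℝ f y
  let N : WithLp 2 (E × ℝ) := WithLp.toLp 2 ((InnerProductSpace.toDual ℝ E).symm L, -1)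
  have hN : ‖N‖ = graphJacobian L := by
    rw [WithLp.prod_norm_eq_of_L2, graphJacobian]
    simp [N, add_comm]
  have hNi : ∀ w : WithLp 2 (E × ℝ), ⟪N, w⟫ = L w.fst - w.snd := by
    intro w
    simp [N, WithLp.prod_inner_apply, sub_eq_add_neg]
  -- every direction entering the supergraph has nonpositive scalar product with `N`
  have h1 : ∀ w : WithLp 2 (E × ℝ), ⟪w, v⟫ < 0 → ⟪N, w⟫ ≤ 0 := by
    intro w hw
    have hd : HasDerivAt (fun t : ℝ => f (y + t • w.fst)) (L w.fst) 0 := by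
      have h0 : HasFDerivAt f L (y + (0 : ℝ) • w.fst) := by simpa using hf.hasFDerivAt
      have h2 : HasDerivAt (fun t : ℝ => y + t • w.fst) w.fst 0 := by
        simpa using ((hasDerivAt_id (0 : ℝ)).smul_const w.fst).const_add y
      exact h0.comp_hasDerivAt (0 : ℝ) h2
    have hc : Tendsto (fun t : ℝ => graphMap f y + t • w) (𝓝[>] 0) (𝓝 (graphMap f y)) := by
      have : Continuous fun t : ℝ => graphMap f y + t • w := by fun_prop
      simpa using (this.tendsto 0).mono_left nhdsWithin_le_nhds
    have hs : ∀ᶠ t in 𝓝[>] (0 : ℝ), t⁻¹ • (f (y + t • w.fst) - f y) ≤ w.snd := by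
      filter_upwards [hin w hw, hc.eventually hG, self_mem_nhdsWithin] with t ht1 ht2 ht3
      have h4 := ht2 ht1
      simp at h4
      have ht3' : 0 < t := ht3
      rw [smul_eq_mul, inv_mul_le_iff₀ ht3']
      linarith
    have hl := (hasDerivAt_iff_tendsto_slope_zero.1 hd).mono_left
      (nhdsWithin_mono (0 : ℝ) (s := Set.Ioi 0) fun t ht => ne_of_gt ht)
    simp only [zero_add, zero_smul, add_zero] at hl
    rw [hNi]
    linarith [le_of_tendsto hl hs]
  -- hence `N = ‖N‖ v`
  have h2 : ⟪N, v⟫ = ‖N‖ := by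
    refine le_antisymm (by simpa [hv] using real_inner_le_norm N v) ?_
    have hN0 : 0 ≤ ‖N‖ := norm_nonneg _
    have h3 : ∀ s > 0, ‖N‖ * ‖N‖ - ‖N‖ * ⟪N, v⟫ ≤ s * ⟪N, v⟫ := by
      intro s hs
      by_cases hlt : ⟪N - (‖N‖ + s) • v, v⟫ < 0
      · have := h1 _ hlt
        rw [inner_sub_right, inner_smul_right, real_inner_self_eq_norm_mul_norm] at this
        linarith
      · rw [inner_sub_left, inner_smul_left, real_inner_self_eq_norm_mul_norm, hv] at hlt
        have := real_inner_le_norm N v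
        simp [hv] at this hlt
        linarith
    have h4 : ‖N‖ * ‖N‖ - ‖N‖ * ⟪N, v⟫ ≤ 0 := by
      have : Tendsto (fun s : ℝ => s * ⟪N, v⟫) (𝓝[>] 0) (𝓝 0) := by
        have : Continuous fun s : ℝ => s * ⟪N, v⟫ := by fun_prop
        simpa using (this.tendsto 0).mono_left nhdsWithin_le_nhds
      exact ge_of_tendsto this (by filter_upwards [self_mem_nhdsWithin] with s hs using h3 s hs)
    have h5 : 0 < ‖N‖ := by rw [hN]; linarith [one_le_graphJacobian L]
    nlinarith
  have h3 : N = ‖N‖ • v := by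
    have : ‖N - ‖N‖ • v‖ ^ 2 = 0 := by
      rw [norm_sub_sq_real, inner_smul_right, h2, norm_smul, hv]
      simp; ring
    exact sub_eq_zero.1 (norm_eq_zero.1 (pow_eq_zero_iff two_ne_zero |>.1 this))
  rw [← hN, ← real_inner_smul_right, ← h3, real_inner_comm, hNi]
  simp

end GraphIntegral

section Polar

variable {F : Type*} [NormedAddCommGroup F] [InnerProductSpace ℝ F] [FiniteDimensional ℝ F]
  [Nontrivial F] [MeasurableSpace F] [BorelSpace F]

/-- Polar coordinates for the integral of a radial function over a set. -/
theorem setIntegral_fun_norm {G : Set F} (hG : MeasurableSet G) {h : ℝ → ℝ}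
    (hh : Integrable fun x : F => h ‖x‖) :
    ∫ x in G, h ‖x‖ = ∫ t in Set.Ioi (0 : ℝ), t ^ (Module.finrank ℝ F - 1) *
      (h t * (volume : Measure F).toSphere.real {θ | t • (θ : F) ∈ G}) := by
  set τ := (volume : Measure F).toSphere
  set ι := Measure.volumeIoiPow (Module.finrank ℝ F - 1)
  have hmp := (volume : Measure F).measurePreserving_homeomorphUnitSphereProd
  have hemb := (homeomorphUnitSphereProd F).measurableEmbedding
  let Q : sphere (0 : F) 1 × Set.Ioi (0 : ℝ) → ℝ :=
    fun z => G.indicator (fun x => h ‖x‖) (z.2.1 • (z.1 : F))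
  have hQ : ∀ x : ({0}ᶜ : Set F), Q (homeomorphUnitSphereProd F x) =
      G.indicator (fun x => h ‖x‖) x := by
    rintro ⟨x, hx⟩
    have hx0 : ‖x‖ ≠ 0 := norm_ne_zero_iff.2 hx
    simp [Q, smul_smul, hx0]
  have hQi : Integrable Q (τ.prod ι) := by
    rw [← hmp.integrable_comp_emb hemb, show Q ∘ homeomorphUnitSphereProd F =
      fun x : ({0}ᶜ : Set F) => G.indicator (fun x => h ‖x‖) (x : F) from funext hQ]
    have := (integrableOn_iff_comap_subtypeVal (μ := (volume : Measure F))
      (f := G.indicator fun x => h ‖x‖)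
      (measurableSet_singleton (0 : F)).compl).1 (hh.indicator hG).integrableOn
    exact this
  have hms : ∀ t : ℝ, MeasurableSet {θ : sphere (0 : F) 1 | t • (θ : F) ∈ G} := fun t =>
    (measurable_subtype_coe.const_smul t) hG
  calc
    ∫ x in G, h ‖x‖ = ∫ x, G.indicator (fun x => h ‖x‖) x := (integral_indicator hG).symm
    _ = ∫ x : ({0}ᶜ : Set F), G.indicator (fun x => h ‖x‖) (x : F) ∂(volume.comap Subtype.val) := by
      rw [integral_subtype_comap (measurableSet_singleton _).compl
        (fun x => G.indicator (fun x => h ‖x‖) x), restrict_compl_singleton]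
    _ = ∫ z, Q z ∂τ.prod ι := by
      rw [← hmp.integral_comp hemb]
      exact integral_congr_ae (.of_forall fun x => (hQ x).symm)
    _ = ∫ t : Set.Ioi (0 : ℝ), h t * τ.real {θ | t.1 • (θ : F) ∈ G} ∂ι := by
      rw [integral_prod_symm _ hQi]
      refine integral_congr_ae (.of_forall fun t => ?_)
      have h1 : ∀ θ : sphere (0 : F) 1, Q (θ, t) =
          {θ : sphere (0 : F) 1 | t.1 • (θ : F) ∈ G}.indicator (fun _ => h t) θ := by
        intro θ
        have ht : |t.1| = t.1 := abs_of_pos t.2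
        by_cases hθ : t.1 • (θ : F) ∈ G <;> simp [Q, hθ, norm_smul, ht]
      simp_rw [h1]
      rw [integral_indicator (hms t), setIntegral_const, smul_eq_mul, mul_comm]
    _ = _ := by
      simp only [ι, Measure.volumeIoiPow, ENNReal.ofReal]
      rw [integral_withDensity_eq_integral_smul,
        integral_subtype_comap measurableSet_Ioi fun a : ℝ =>
          Real.toNNReal (a ^ (Module.finrank ℝ F - 1)) •
            (h a * τ.real {θ | a • (θ : F) ∈ G})]
      · refine setIntegral_congr_fun measurableSet_Ioi fun x hx => ?_
        rw [NNReal.smul_def, Real.coe_toNNReal _ (pow_nonneg (le_of_lt hx) _), smul_eq_mul]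
      · exact (measurable_subtype_coe.pow_const _).real_toNNReal

/-- Derivative of the dilations of a radial integral over a set. -/
theorem hasDerivAt_setIntegral_radial {G : Set F} (hG : MeasurableSet G) {φ : ℝ → ℝ}
    (hφ : ContDiff ℝ 1 φ) {a b : ℝ} (ha : 0 < a) (hab : ∀ t, t ∉ Set.Icc a b → φ t = 0) :
    HasDerivAt (fun c : ℝ => ∫ x in G, φ (c * ‖x‖) / ‖x‖ ^ Module.finrank ℝ F)
      (∫ t in Set.Ioi (0 : ℝ), deriv φ t *
        (volume : Measure F).toSphere.real {θ | t • (θ : F) ∈ G}) 1 := by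
  set m := Module.finrank ℝ F
  have hm : 0 < m := Module.finrank_pos
  have hd' : ∀ t, t ∉ Set.Icc a b → deriv φ t = 0 := by
    intro t ht
    have : φ =ᶠ[𝓝 t] fun _ => 0 := by
      filter_upwards [isClosed_Icc.isOpen_compl.mem_nhds ht] with s hs using hab s hs
    rw [this.deriv_eq, deriv_const]
  have hdc : Continuous (deriv φ) := hφ.continuous_deriv le_rfl
  obtain ⟨C, hC⟩ : ∃ C, ∀ t, ‖deriv φ t‖ ≤ C := by
    obtain ⟨C, hC⟩ := isCompact_Icc.exists_bound_of_continuousOn (s := Set.Icc a b) hdc.continuousOn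
    refine ⟨max C 0, fun t => ?_⟩
    by_cases ht : t ∈ Set.Icc a b
    · exact (hC t ht).trans (le_max_left _ _)
    · simp [hd' t ht]
  have hC0 : 0 ≤ C := (norm_nonneg _).trans (hC 0)
  obtain ⟨C', hC'⟩ : ∃ C', ∀ t, ‖φ t‖ ≤ C' := by
    obtain ⟨C, hC⟩ := isCompact_Icc.exists_bound_of_continuousOn (s := Set.Icc a b)
      hφ.continuous.continuousOn
    refine ⟨max C 0, fun t => ?_⟩
    by_cases ht : t ∈ Set.Icc a b
    · exact (hC t ht).trans (le_max_left _ _)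
    · simp [hab t ht]
  have hC'0 : 0 ≤ C' := (norm_nonneg _).trans (hC' 0)
  have hφm := hφ.continuous.measurable
  have hdm := hdc.measurable
  -- bounds valid for all dilation factors in `(1/2, 2)`
  have hbd : ∀ c ∈ Set.Ioo (1 / 2 : ℝ) 2, ∀ x : F,
      ‖deriv φ (c * ‖x‖) * ‖x‖ / ‖x‖ ^ m‖ ≤
        (closedBall (0 : F) (2 * b)).indicator (fun _ => C * (2 * b) / (a / 2) ^ m) x := by
    intro c hc x
    by_cases hx : c * ‖x‖ ∈ Set.Icc a b
    · have h0 := norm_nonneg x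
      have h1 : ‖x‖ ≤ 2 * b := by nlinarith [hx.2, hc.1]
      have h2 : a / 2 ≤ ‖x‖ := by nlinarith [hx.1, hc.2]
      rw [Set.indicator_of_mem (by simpa using h1), norm_div, norm_mul, norm_norm, norm_pow,
        norm_norm]
      have := hC (c * ‖x‖)
      have : 0 ≤ C * (2 * b) := mul_nonneg hC0 (h0.trans h1)
      gcongr
    · rw [hd' _ hx]
      have hb : 0 ≤ C * (2 * b) / (a / 2) ^ m ∨ b < 0 := by
        rcases le_or_gt 0 b with hb | hb
        · left; positivity
        · exact Or.inr hb
      rcases hb with hb | hb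
      · simpa using Set.indicator_nonneg (fun _ _ => hb) x
      · rw [closedBall_eq_empty.2 (by linarith)]; simp
  have hint : ∀ R A : ℝ, Integrable ((closedBall (0 : F) R).indicator (fun _ => A)) volume :=
    fun R A => (integrable_indicator_iff measurableSet_closedBall).2
      (integrableOn_const measure_closedBall_lt_top.ne)
  have hF0 : Integrable (fun x : F => φ (1 * ‖x‖) / ‖x‖ ^ m) := by
    refine (hint b (C' / a ^ m)).mono'
      (show Measurable fun x : F => φ (1 * ‖x‖) / ‖x‖ ^ m by fun_prop).aestronglyMeasurable
      (.of_forall fun x => ?_)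
    by_cases hx : ‖x‖ ∈ Set.Icc a b
    · rw [Set.indicator_of_mem (by simpa using hx.2), one_mul, norm_div, norm_pow, norm_norm]
      have := hC' ‖x‖
      have := hx.1
      gcongr
    · rw [one_mul, hab _ hx]
      simpa using Set.indicator_nonneg (fun _ _ => by positivity) x
  have hs : Set.Ioo (1 / 2 : ℝ) 2 ∈ 𝓝 (1 : ℝ) := Ioo_mem_nhds (by norm_num) (by norm_num)
  have key := hasDerivAt_integral_of_dominated_loc_of_deriv_le (μ := volume.restrict G)
    (F := fun c (x : F) => φ (c * ‖x‖) / ‖x‖ ^ m)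
    (F' := fun c (x : F) => deriv φ (c * ‖x‖) * ‖x‖ / ‖x‖ ^ m)
    (x₀ := (1 : ℝ)) (bound := (closedBall (0 : F) (2 * b)).indicator
      (fun _ => C * (2 * b) / (a / 2) ^ m)) hs
    (.of_forall fun c => by
      have : Measurable fun x : F => φ (c * ‖x‖) / ‖x‖ ^ m := by fun_prop
      exact this.aestronglyMeasurable) hF0.integrableOn
    (by
      have : Measurable fun x : F => deriv φ (1 * ‖x‖) * ‖x‖ / ‖x‖ ^ m := by fun_prop
      exact this.aestronglyMeasurable)
    (.of_forall fun x c hc => hbd c hc x) (hint _ _).integrableOn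
    (.of_forall fun x c _ => by
      have h1 : HasDerivAt (fun c : ℝ => c * ‖x‖) ‖x‖ c := by
        simpa using (hasDerivAt_id c).mul_const ‖x‖
      exact (((hφ.differentiable one_ne_zero _).hasDerivAt).comp c h1).div_const _)
  refine key.2.congr_deriv ?_
  have hi : Integrable (fun x : F => (fun t => deriv φ t * t / t ^ m) ‖x‖) := by
    refine (hint (2 * b) (C * (2 * b) / (a / 2) ^ m)).mono'
      (show Measurable fun x : F => deriv φ ‖x‖ * ‖x‖ / ‖x‖ ^ m by fun_prop).aestronglyMeasurable
      (.of_forall fun x => ?_)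
    simpa using hbd 1 ⟨by norm_num, by norm_num⟩ x
  have := setIntegral_fun_norm hG (h := fun t => deriv φ t * t / t ^ m) hi
  simp only [one_mul]
  rw [this]
  refine setIntegral_congr_fun measurableSet_Ioi fun t ht => ?_
  have ht0 : t ≠ 0 := ne_of_gt ht
  have : t ^ m = t ^ (m - 1) * t := by rw [← pow_succ, Nat.sub_add_cancel hm]
  simp only [m] at this ⊢
  rw [this]
  field_simp

end Polar

section Dilation

/-- The open region above the graph of `f`. -/
def supergraph {E : Type*} (f : E → ℝ) : Set (WithLp 2 (E × ℝ)) := {x | f x.fst < x.snd}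

theorem mem_supergraph {E : Type*} {f : E → ℝ} {x : WithLp 2 (E × ℝ)} :
    x ∈ supergraph f ↔ f x.fst < x.snd := Iff.rfl

variable {E : Type*} [NormedAddCommGroup E] [InnerProductSpace ℝ E] [FiniteDimensional ℝ E]
  [MeasurableSpace E] [BorelSpace E]

theorem isOpen_supergraph {f : E → ℝ} (hf : Continuous f) : IsOpen (supergraph f) := by
  have c1 : Continuous fun v : WithLp 2 (E × ℝ) => v.fst :=
    continuous_fst.comp (WithLp.prod_continuous_ofLp 2 E ℝ)
  have c2 : Continuous fun v : WithLp 2 (E × ℝ) => v.snd :=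
    continuous_snd.comp (WithLp.prod_continuous_ofLp 2 E ℝ)
  exact isOpen_lt (hf.comp c1) c2

theorem hasDerivAt_integral_Ioi_lower {g : ℝ → ℝ} (hg : Continuous g) (hgi : Integrable g) (s : ℝ) :
    HasDerivAt (fun s => ∫ z in Set.Ioi s, g z) (-g s) s := by
  have h : ∀ s, ∫ z in Set.Ioi s, g z = (∫ z in Set.Ioi (0 : ℝ), g z) - ∫ z in (0 : ℝ)..s, g z := by
    intro s
    rw [← intervalIntegral.integral_Ioi_sub_Ioi' hgi.integrableOn hgi.integrableOn]
    abel
  rw [show (fun s => ∫ z in Set.Ioi s, g z) = _ from funext h]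
  exact (intervalIntegral.integral_hasDerivAt_right (hg.intervalIntegrable _ _)
    (hg.stronglyMeasurableAtFilter _ _) hg.continuousAt).const_sub _

theorem LipschitzWith.abs_dilation_sub_le {f : E → ℝ} {K : ℝ≥0} (hf : LipschitzWith K f) (y : E)
    {c e : ℝ} (hc : 1 / 2 < c) (he : 1 / 2 < e) :
    |c * f (c⁻¹ • y) - e * f (e⁻¹ • y)| ≤ (|f 0| + 4 * K * ‖y‖) * |c - e| := by
  have hc0 : 0 < c := by linarith
  have he0 : 0 < e := by linarith
  have hK : (0 : ℝ) ≤ K := K.2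
  have hci : c⁻¹ ≤ 2 := by rw [inv_le_comm₀ hc0 two_pos]; linarith
  have h1 : |f (c⁻¹ • y)| ≤ |f 0| + 2 * K * ‖y‖ := by
    have h := hf.dist_le_mul (c⁻¹ • y) 0
    rw [Real.dist_eq, dist_zero_right, norm_smul, Real.norm_of_nonneg (inv_nonneg.2 hc0.le)] at h
    have h2 := abs_sub_abs_le_abs_sub (f (c⁻¹ • y)) (f 0)
    have h3 : K * (c⁻¹ * ‖y‖) ≤ K * (2 * ‖y‖) := by gcongr
    linarith
  have h2 : e * |f (c⁻¹ • y) - f (e⁻¹ • y)| ≤ 2 * K * ‖y‖ * |c - e| := by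
    have h := hf.dist_le_mul (c⁻¹ • y) (e⁻¹ • y)
    rw [Real.dist_eq, dist_eq_norm, ← sub_smul, norm_smul, Real.norm_eq_abs] at h
    have h4 : e * |c⁻¹ - e⁻¹| = c⁻¹ * |c - e| := by
      rw [inv_sub_inv hc0.ne' he0.ne', abs_div, abs_of_pos (mul_pos hc0 he0), abs_sub_comm]
      field_simp
    calc e * |f (c⁻¹ • y) - f (e⁻¹ • y)| ≤ e * (K * (|c⁻¹ - e⁻¹| * ‖y‖)) := by gcongr
      _ = K * ‖y‖ * (e * |c⁻¹ - e⁻¹|) := by ring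
      _ = K * ‖y‖ * (c⁻¹ * |c - e|) := by rw [h4]
      _ ≤ K * ‖y‖ * (2 * |c - e|) := by gcongr
      _ = _ := by ring
  calc |c * f (c⁻¹ • y) - e * f (e⁻¹ • y)|
      = |(c - e) * f (c⁻¹ • y) + e * (f (c⁻¹ • y) - f (e⁻¹ • y))| := by congr 1; ring
    _ ≤ |c - e| * |f (c⁻¹ • y)| + e * |f (c⁻¹ • y) - f (e⁻¹ • y)| := by
      refine (abs_add_le _ _).trans_eq ?_
      rw [abs_mul, abs_mul, abs_of_pos he0]
    _ ≤ |c - e| * (|f 0| + 2 * K * ‖y‖) + 2 * K * ‖y‖ * |c - e| := by gcongr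
    _ = _ := by ring

theorem hasDerivAt_dilation {f : E → ℝ} {y : E} (hf : DifferentiableAt ℝ f y) :
    HasDerivAt (fun c : ℝ => c * f (c⁻¹ • y)) (f y - fderiv ℝ f y y) 1 := by
  have h0 : HasFDerivAt f (fderiv ℝ f y) ((1 : ℝ)⁻¹ • y) := by simpa using hf.hasFDerivAt
  have h1 : HasDerivAt (fun c : ℝ => c⁻¹ • y) (-y) 1 := by
    simpa using (hasDerivAt_inv (one_ne_zero (α := ℝ))).smul_const y
  have h2 := h0.comp_hasDerivAt (1 : ℝ) h1
  refine ((hasDerivAt_id (1 : ℝ)).mul h2).congr_deriv ?_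
  simp [sub_eq_add_neg]

/-- Derivative, with respect to dilations of a Lipschitz supergraph, of the integral of a radial
function with bounded support. -/
theorem hasDerivAt_integral_dilated_supergraph {f : E → ℝ} {K : ℝ≥0} (hf : LipschitzWith K f)
    {k : ℝ → ℝ} (hk : Continuous k) {b : ℝ} (hb : ∀ t, b < t → k t = 0) :
    HasDerivAt (fun c : ℝ => ∫ x, (supergraph f).indicator 1 (c⁻¹ • x) * k ‖x‖)
      (∫ y : E, k ‖graphMap f y‖ * (fderiv ℝ f y y - f y)) 1 := by
  let V := WithLp 2 (E × ℝ)
  let u : E → ℝ → ℝ := fun y s => k ‖(WithLp.toLp 2 (y, s) : V)‖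
  have hu : Continuous fun z : E × ℝ => u z.1 z.2 :=
    hk.comp (continuous_norm.comp (WithLp.prod_continuous_toLp 2 E ℝ))
  have huy : ∀ y, Continuous (u y) := fun y => hu.comp (Continuous.prodMk_right y)
  have hu1 : ∀ y s, b < ‖y‖ → u y s = 0 := fun y s h =>
    hb _ (h.trans_le (norm_l2prod_fst_le (WithLp.toLp 2 (y, s) : V)))
  have hu2 : ∀ y s, b < |s| → u y s = 0 := fun y s h =>
    hb _ (h.trans_le (abs_l2prod_snd_le (WithLp.toLp 2 (y, s) : V)))
  have hucs : HasCompactSupport fun z : E × ℝ => u z.1 z.2 := by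
    refine HasCompactSupport.intro ((isCompact_closedBall (0 : E) b).prod (isCompact_Icc (a := -b) (b := b)))
      fun z hz => ?_
    by_contra h
    refine hz ⟨?_, ?_⟩
    · by_contra h'
      exact h (hu1 _ _ (by simpa using h'))
    · by_contra h'
      rw [Set.mem_Icc, ← abs_le, not_le] at h'
      exact h (hu2 _ _ h')
  have hucs' : ∀ y, HasCompactSupport (u y) := by
    intro y
    refine HasCompactSupport.intro (isCompact_Icc (a := -b) (b := b)) fun s hs => ?_
    rw [Set.mem_Icc, ← abs_le, not_le] at hs
    exact hu2 _ _ hs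
  have hui := hu.integrable_of_hasCompactSupport (μ := volume) hucs
  have huyi : ∀ y, Integrable (u y) := fun y => (huy y).integrable_of_hasCompactSupport (hucs' y)
  obtain ⟨C, hC⟩ := hucs.exists_bound_of_continuous hu
  have hC0 : 0 ≤ C := (norm_nonneg _).trans (hC 0)
  let P : E → ℝ → ℝ := fun y s => ∫ z in Set.Ioi s, u y z
  have hP : ∀ y s, HasDerivAt (P y) (-u y s) s := fun y s =>
    hasDerivAt_integral_Ioi_lower (huy y) (huyi y) s
  have hPl : ∀ y s t, |P y s - P y t| ≤ C * |s - t| := by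
    intro y s t
    have := Convex.norm_image_sub_le_of_norm_hasDerivWithin_le (f := P y) (C := C) (s := Set.univ)
      (fun x _ => (hP y x).hasDerivWithinAt) (fun x _ => by simpa using hC (y, x)) convex_univ
      (Set.mem_univ t) (Set.mem_univ s)
    simpa using this
  have hP0 : ∀ y s, b < ‖y‖ → P y s = 0 := by
    intro y s h
    simp [P, hu1 y _ h]
  -- the integrals over dilated supergraphs as iterated integrals
  have hmeas : ∀ c : ℝ, MeasurableSet {z : E × ℝ | c⁻¹ • (WithLp.toLp 2 z : V) ∈ supergraph f} := by
    intro c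
    have : Continuous fun z : E × ℝ => c⁻¹ • (WithLp.toLp 2 z : V) :=
      (continuous_const_smul c⁻¹).comp (WithLp.prod_continuous_toLp 2 E ℝ)
    exact ((isOpen_supergraph hf.continuous).preimage this).measurableSet
  have hemb := (WithLp.homeomorphProd 2 E ℝ).symm.measurableEmbedding
  have hI : ∀ c : ℝ, (fun z : E × ℝ => (supergraph f).indicator (1 : V → ℝ)
        (c⁻¹ • (WithLp.toLp 2 z : V)) * u z.1 z.2) =
      {z : E × ℝ | c⁻¹ • (WithLp.toLp 2 z : V) ∈ supergraph f}.indicator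
        (fun z => u z.1 z.2) := by
    intro c
    ext z
    by_cases h : c⁻¹ • (WithLp.toLp 2 z : V) ∈ supergraph f
    · simp [h]
    · simp [h]
  have hIi : ∀ c : ℝ, Integrable (fun z : E × ℝ => (supergraph f).indicator (1 : V → ℝ)
        (c⁻¹ • (WithLp.toLp 2 z : V)) * u z.1 z.2) := by
    intro c
    rw [hI]
    exact hui.indicator (hmeas c)
  have hPc : ∀ c : ℝ, 0 < c → ∀ y, (∫ s, (supergraph f).indicator (1 : V → ℝ)
      (c⁻¹ • (WithLp.toLp 2 (y, s) : V)) * u y s) = P y (c * f (c⁻¹ • y)) := by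
    intro c hc y
    simp only [P]
    rw [← integral_indicator measurableSet_Ioi]
    refine integral_congr_ae (.of_forall fun s => ?_)
    have : c⁻¹ • (WithLp.toLp 2 (y, s) : V) ∈ supergraph f ↔ s ∈ Set.Ioi (c * f (c⁻¹ • y)) := by
      rw [mem_supergraph]
      simp only [WithLp.smul_fst, WithLp.smul_snd, smul_eq_mul, Set.mem_Ioi]
      exact lt_inv_mul_iff₀ hc
    by_cases h : s ∈ Set.Ioi (c * f (c⁻¹ • y))
    · simp only [Set.indicator_of_mem h, Set.indicator_of_mem (this.2 h)]; simp
    · simp only [Set.indicator_of_notMem h, Set.indicator_of_notMem (fun h' => h (this.1 h'))]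
      simp
  have hB : ∀ c : ℝ, 0 < c → ∫ x, (supergraph f).indicator 1 (c⁻¹ • x) * k ‖x‖ =
      ∫ y, P y (c * f (c⁻¹ • y)) := by
    intro c hc
    rw [← (WithLp.volume_preserving_toLp E ℝ).integral_comp hemb]
    rw [Measure.volume_eq_prod, integral_prod _ (hIi c)]
    exact integral_congr_ae (.of_forall fun y => hPc c hc y)
  have hPm : ∀ c : ℝ, 0 < c → Integrable fun y => P y (c * f (c⁻¹ • y)) := by
    intro c hc
    have := (hIi c).integral_prod_left
    exact this.congr (.of_forall fun y => hPc c hc y)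
  have hs : Set.Ioo (1 / 2 : ℝ) 2 ∈ 𝓝 (1 : ℝ) := Ioo_mem_nhds (by norm_num) (by norm_num)
  have hpos : ∀ᶠ c : ℝ in 𝓝 1, 0 < c := lt_mem_nhds one_pos
  have key := hasDerivAt_integral_of_dominated_loc_of_lip (μ := (volume : Measure E))
    (F := fun (c : ℝ) y => P y (c * f (c⁻¹ • y)))
    (F' := fun y => k ‖graphMap f y‖ * (fderiv ℝ f y y - f y)) (x₀ := (1 : ℝ))
    (bound := (closedBall (0 : E) b).indicator fun _ => C * (|f 0| + 4 * K * b)) hs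
    (hpos.mono fun c hc => (hPm c hc).aestronglyMeasurable) (hPm 1 one_pos)
    (by
      have h1 : Measurable fun y => fderiv ℝ f y y := by
        have h2 : Continuous fun q : (E →L[ℝ] ℝ) × E => q.1 q.2 := by fun_prop
        exact h2.measurable.comp ((measurable_fderiv ℝ f).prodMk measurable_id)
      have h3 := (hk.comp (isClosedEmbedding_graphMap hf.continuous).continuous.norm).measurable
      exact (h3.mul (h1.sub hf.continuous.measurable)).aestronglyMeasurable)
    (.of_forall fun y => by
      refine LipschitzOnWith.of_dist_le_mul fun c hc e he => ?_
      rw [Real.dist_eq, Real.dist_eq, Real.coe_nnabs]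
      by_cases hy : ‖y‖ ≤ b
      · have hb0 : 0 ≤ b := (norm_nonneg y).trans hy
        have hnn : 0 ≤ C * (|f 0| + 4 * K * b) := by positivity
        rw [Set.indicator_of_mem (by simpa using hy), abs_of_nonneg hnn]
        refine (hPl _ _ _).trans ?_
        rw [mul_assoc]
        refine mul_le_mul_of_nonneg_left ?_ hC0
        refine (hf.abs_dilation_sub_le y hc.1 he.1).trans ?_
        gcongr
      · rw [hP0 _ _ (not_le.1 hy), hP0 _ _ (not_le.1 hy)]
        simp only [sub_self, abs_zero]
        positivity)
    ((integrable_indicator_iff measurableSet_closedBall).2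
      (integrableOn_const measure_closedBall_lt_top.ne))
    (by
      filter_upwards [hf.ae_differentiableAt (μ := volume)] with y hy
      have h2 := (hP y (1 * f ((1 : ℝ)⁻¹ • y))).comp (1 : ℝ) (hasDerivAt_dilation hy)
      refine h2.congr_deriv ?_
      simp only [inv_one, one_smul, one_mul]
      change -k ‖graphMap f y‖ * _ = _
      ring)
  refine key.2.congr_of_eventuallyEq ?_
  filter_upwards [hpos] with c hc using hB c hc

end Dilation

section Key

variable {E : Type*} [NormedAddCommGroup E] [InnerProductSpace ℝ E] [FiniteDimensional ℝ E]
  [MeasurableSpace E] [BorelSpace E]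

theorem measurable_graph_support (f : E → ℝ) (hf : Continuous f) :
    Measurable fun y => fderiv ℝ f y y - f y := by
  have h2 : Continuous fun q : (E →L[ℝ] ℝ) × E => q.1 q.2 := by fun_prop
  exact (h2.measurable.comp ((measurable_fderiv ℝ f).prodMk measurable_id)).sub hf.measurable

theorem LipschitzWith.abs_graph_support_le {f : E → ℝ} {K : ℝ≥0} (hf : LipschitzWith K f) (y : E) :
    |fderiv ℝ f y y - f y| ≤ |f 0| + 2 * K * ‖y‖ := by
  have h1 : |fderiv ℝ f y y| ≤ K * ‖y‖ :=
    ((fderiv ℝ f y).le_opNorm y).trans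
      (mul_le_mul_of_nonneg_right (norm_fderiv_le_of_lipschitz ℝ hf) (norm_nonneg y))
  have h2 := hf.dist_le_mul y 0
  rw [Real.dist_eq, dist_zero_right] at h2
  have h3 := abs_sub_abs_le_abs_sub (f y) (f 0)
  have h4 := abs_sub (fderiv ℝ f y y) (f y)
  linarith

/-- The angular measure of the part of the sphere of radius `t` lying in `G`. -/
def angularMeasure {F : Type*} [NormedAddCommGroup F] [InnerProductSpace ℝ F]
    [FiniteDimensional ℝ F] [MeasurableSpace F] [BorelSpace F] (G : Set F) (t : ℝ) : ℝ :=
  (volume : Measure F).toSphere.real {θ | t • (θ : F) ∈ G}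

theorem measurable_angularMeasure {F : Type*} [NormedAddCommGroup F] [InnerProductSpace ℝ F]
    [FiniteDimensional ℝ F] [MeasurableSpace F] [BorelSpace F] {G : Set F} (hG : IsOpen G) :
    Measurable (angularMeasure G) := by
  have h : MeasurableSet {z : ℝ × sphere (0 : F) 1 | z.1 • (z.2 : F) ∈ G} :=
    (hG.preimage (by fun_prop)).measurableSet
  exact (measurable_measure_prodMk_left (ν := (volume : Measure F).toSphere) h).ennreal_toReal

theorem integral_graph_support_mul_radial {f : E → ℝ} {K : ℝ≥0} (hf : LipschitzWith K f)
    {φ : ℝ → ℝ} (hφ : ContDiff ℝ 1 φ) {a b : ℝ} (ha : 0 < a)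
    (hab : ∀ t, t ∉ Set.Icc a b → φ t = 0) :
    ∫ y : E, φ ‖graphMap f y‖ / ‖graphMap f y‖ ^ Module.finrank ℝ (WithLp 2 (E × ℝ)) *
        (fderiv ℝ f y y - f y) =
      ∫ t in Set.Ioi (0 : ℝ), deriv φ t * angularMeasure (supergraph f) t := by
  set m := Module.finrank ℝ (WithLp 2 (E × ℝ))
  have hnt : Nontrivial (WithLp 2 (E × ℝ)) :=
    ⟨WithLp.toLp 2 (0, 1), 0, fun h => by simpa using congrArg WithLp.snd h⟩
  let k : ℝ → ℝ := fun t => φ t / t ^ m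
  have hk : Continuous k := by
    refine continuous_iff_continuousAt.2 fun t => ?_
    by_cases ht : t = 0
    · have : k =ᶠ[𝓝 t] fun _ => 0 := by
        filter_upwards [Iio_mem_nhds (show t < a by rw [ht]; exact ha)] with s hs
        simp [k, hab s fun h => absurd h.1 (not_le.2 hs)]
      exact continuousAt_const.congr this.symm
    · exact hφ.continuous.continuousAt.div (by fun_prop) (pow_ne_zero _ ht)
  have hGm := (isOpen_supergraph hf.continuous).measurableSet
  have h1 := hasDerivAt_integral_dilated_supergraph hf hk (b := b) fun t ht => by
    simp [k, hab t fun h => absurd h.2 (not_le.2 ht)]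
  have h2 := hasDerivAt_setIntegral_radial hGm hφ ha hab
  refine h1.unique (h2.congr_of_eventuallyEq ?_)
  filter_upwards [lt_mem_nhds (show (0 : ℝ) < 1 from one_pos)] with c hc
  have h3 := Measure.integral_comp_inv_smul_of_nonneg (volume : Measure (WithLp 2 (E × ℝ)))
    (fun x => (supergraph f).indicator 1 x * k (c * ‖x‖)) hc.le
  have h4 : ∀ x : WithLp 2 (E × ℝ), c * ‖c⁻¹ • x‖ = ‖x‖ := by
    intro x
    rw [norm_smul, Real.norm_of_nonneg (inv_nonneg.2 hc.le), mul_inv_cancel_left₀ hc.ne']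
  simp only [h4] at h3
  rw [h3, smul_eq_mul, ← integral_const_mul, ← integral_indicator hGm]
  refine integral_congr_ae (.of_forall fun x => ?_)
  by_cases hx : x ∈ supergraph f
  · simp only [hx, Set.indicator_of_mem, Pi.one_apply, one_mul, k]
    change c ^ m * _ = _ / _ ^ m
    rw [mul_pow]
    field_simp
  · simp [hx]

theorem deriv_eq_zero_of_notMem_Icc {φ : ℝ → ℝ} {a b : ℝ} {u v : ℝ} (hu : ∀ t < a, φ t = u)
    (hv : ∀ t > b, φ t = v) {t : ℝ} (ht : t ∉ Set.Icc a b) : deriv φ t = 0 := by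
  rw [Set.mem_Icc, not_and_or, not_le, not_le] at ht
  rcases ht with ht | ht
  · have : φ =ᶠ[𝓝 t] fun _ => u := by
      filter_upwards [Iio_mem_nhds ht] with s hs using hu s hs
    rw [this.deriv_eq, deriv_const]
  · have : φ =ᶠ[𝓝 t] fun _ => v := by
      filter_upwards [Ioi_mem_nhds ht] with s hs using hv s hs
    rw [this.deriv_eq, deriv_const]

/-- Averages of a function against the derivative of a smooth monotone step. -/
theorem abs_integral_deriv_step_mul_sub_le {T A : ℝ → ℝ} (hT : ContDiff ℝ 1 T) (hTm : Monotone T)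
    {a b c A₀ η : ℝ} (ha : 0 < a) (hac : a ≤ c) (hcb : c < b) (hT0 : ∀ t < a, T t = 0)
    (hT1 : ∀ t > c, T t = 1) (hA : Measurable A) (hAη : ∀ t ∈ Set.Ioo 0 b, |A t - A₀| ≤ η) :
    IntegrableOn (fun t => deriv T t * A t) (Set.Ioi 0) ∧
      |(∫ t in Set.Ioi (0 : ℝ), deriv T t * A t) - A₀| ≤ η := by
  have hb : 0 < b := by linarith
  have hd : Continuous (deriv T) := hT.continuous_deriv le_rfl
  have hd0 : ∀ t, t ∉ Set.Icc a c → deriv T t = 0 := fun t ht =>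
    deriv_eq_zero_of_notMem_Icc hT0 hT1 ht
  have hdi : IntegrableOn (deriv T) (Set.Ioc 0 b) := (hd.intervalIntegrable 0 b).1
  have hone : ∫ t in Set.Ioc 0 b, deriv T t = 1 := by
    rw [← intervalIntegral.integral_of_le hb.le,
      intervalIntegral.integral_deriv_eq_sub (fun x _ => hT.differentiable one_ne_zero x)
        (hd.intervalIntegrable 0 b), hT0 0 ha, hT1 b hcb, sub_zero]
  have hptw : ∀ t ∈ Set.Ioc 0 b, ‖deriv T t * (A t - A₀)‖ ≤ deriv T t * η := by
    intro t ht
    rw [norm_mul, Real.norm_of_nonneg hTm.deriv_nonneg]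
    rcases ht.2.lt_or_eq with h | h
    · exact mul_le_mul_of_nonneg_left (hAη t ⟨ht.1, h⟩) hTm.deriv_nonneg
    · rw [h, hd0 b fun h' => absurd h'.2 (not_le.2 hcb)]
      simp
  have hae : ∀ᵐ t ∂volume.restrict (Set.Ioc 0 b), ‖deriv T t * (A t - A₀)‖ ≤ deriv T t * η :=
    (ae_restrict_iff' measurableSet_Ioc).2 (.of_forall hptw)
  have hI1 : IntegrableOn (fun t => deriv T t * (A t - A₀)) (Set.Ioc 0 b) :=
    (hdi.mul_const η).mono' (hd.measurable.mul (hA.sub_const _)).aestronglyMeasurable hae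
  have hI2 : IntegrableOn (fun t => deriv T t * A t) (Set.Ioc 0 b) := by
    refine (hI1.add (hdi.mul_const A₀)).congr (.of_forall fun t => ?_)
    simp only [Pi.add_apply]
    ring
  have hz : ∀ t ∈ Set.Ioi (0 : ℝ) \ Set.Ioc 0 b, deriv T t * A t = 0 := by
    intro t ht
    rw [hd0 t fun h => ht.2 ⟨ht.1, h.2.trans hcb.le⟩, zero_mul]
  refine ⟨hI2.of_forall_sdiff_eq_zero measurableSet_Ioi hz, ?_⟩
  rw [setIntegral_eq_of_subset_of_forall_sdiff_eq_zero measurableSet_Ioi Set.Ioc_subset_Ioi_self hz]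
  have h5 : (∫ t in Set.Ioc 0 b, deriv T t * A t) - A₀ =
      ∫ t in Set.Ioc 0 b, deriv T t * (A t - A₀) := by
    simp only [mul_sub]
    rw [integral_sub hI2 (hdi.mul_const A₀), integral_mul_const, hone, one_mul]
  rw [h5]
  refine (norm_integral_le_of_norm_le (hdi.mul_const η) hae).trans_eq ?_
  rw [integral_mul_const, hone, one_mul]

/-- The smooth step rising from `0` to `1` on the interval `[c - δ, c]`. -/
def smoothStep (c δ t : ℝ) : ℝ := Real.smoothTransition ((t - c) / δ + 1)

theorem smoothStep_eq_one {c δ t : ℝ} (hδ : 0 < δ) (ht : c ≤ t) : smoothStep c δ t = 1 := by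
  refine Real.smoothTransition.one_of_one_le ?_
  have : 0 ≤ (t - c) / δ := div_nonneg (by linarith) hδ.le
  linarith

theorem smoothStep_eq_zero {c δ t : ℝ} (hδ : 0 < δ) (ht : t ≤ c - δ) : smoothStep c δ t = 0 := by
  refine Real.smoothTransition.zero_of_nonpos ?_
  have : (t - c) / δ ≤ -1 := by rw [div_le_iff₀ hδ]; linarith
  linarith

theorem contDiff_smoothStep (c δ : ℝ) : ContDiff ℝ 1 (smoothStep c δ) :=
  (Real.smoothTransition.contDiff (n := 1)).comp (by fun_prop)

theorem monotone_smoothStep (c : ℝ) {δ : ℝ} (hδ : 0 < δ) : Monotone (smoothStep c δ) := by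
  intro s t h
  refine Real.smoothTransition.monotone ?_
  gcongr

theorem tendsto_smoothStep (c t : ℝ) :
    Tendsto (fun δ => smoothStep c δ t) (𝓝[>] 0) (𝓝 ((Set.Ici c).indicator 1 t)) := by
  refine tendsto_const_nhds.congr' ?_
  by_cases h : c ≤ t
  · filter_upwards [self_mem_nhdsWithin] with δ hδ
    rw [smoothStep_eq_one hδ h, Set.indicator_of_mem (Set.mem_Ici.2 h), Pi.one_apply]
  · have h' : 0 < c - t := by linarith
    filter_upwards [self_mem_nhdsWithin, nhdsWithin_le_nhds (Iio_mem_nhds h')] with δ hδ hδ'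
    rw [smoothStep_eq_zero hδ (by rw [Set.mem_Iio] at hδ'; linarith), Set.indicator_of_notMem (mt Set.mem_Ici.1 h)]

/-- If the angular measure of a Lipschitz supergraph oscillates little near the origin, the truncated
solid angle subtended by the graph is small. -/
theorem abs_setIntegral_graph_support_le {f : E → ℝ} {K : ℝ≥0} (hf : LipschitzWith K f)
    {a b c A₀ η : ℝ} (ha : 0 < a) (hac : a ≤ c) (hcb : c < b)
    (hA : ∀ t ∈ Set.Ioo 0 b, |angularMeasure (supergraph f) t - A₀| ≤ η) :
    |∫ y in {y : E | ‖graphMap f y‖ ∈ Set.Ico a c},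
      (fderiv ℝ f y y - f y) / ‖graphMap f y‖ ^ Module.finrank ℝ (WithLp 2 (E × ℝ))| ≤ 2 * η := by
  set m := Module.finrank ℝ (WithLp 2 (E × ℝ))
  set g : E → ℝ := fun y => fderiv ℝ f y y - f y
  have hgm : Measurable g := measurable_graph_support f hf.continuous
  have hρ : Continuous fun y => ‖graphMap f y‖ :=
    (isClosedEmbedding_graphMap hf.continuous).continuous.norm
  let φ : ℝ → ℝ → ℝ := fun δ t => smoothStep a δ t - smoothStep c δ t
  have hφ : ∀ δ, ContDiff ℝ 1 (φ δ) := fun δ =>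
    (contDiff_smoothStep a δ).sub (contDiff_smoothStep c δ)
  have hφ0 : ∀ δ ∈ Set.Ioo 0 (a / 2), ∀ t, t ∉ Set.Icc (a / 2) c → φ δ t = 0 := by
    intro δ hδ t ht
    rw [Set.mem_Icc, not_and_or, not_le, not_le] at ht
    rcases ht with ht | ht
    · simp only [φ]
      rw [smoothStep_eq_zero hδ.1 (by linarith [hδ.2]),
        smoothStep_eq_zero hδ.1 (by linarith [hδ.2]), sub_zero]
    · simp only [φ]
      rw [smoothStep_eq_one hδ.1 (by linarith), smoothStep_eq_one hδ.1 ht.le, sub_self]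
  have hφ1 : ∀ δ t, |φ δ t| ≤ 1 := by
    intro δ t
    have h1 := Real.smoothTransition.nonneg ((t - a) / δ + 1)
    have h2 := Real.smoothTransition.le_one ((t - a) / δ + 1)
    have h3 := Real.smoothTransition.nonneg ((t - c) / δ + 1)
    have h4 := Real.smoothTransition.le_one ((t - c) / δ + 1)
    rw [abs_le]
    simp only [φ, smoothStep]
    constructor <;> linarith
  have hsmall : Set.Ioo 0 (a / 2) ∈ 𝓝[>] (0 : ℝ) := Ioo_mem_nhdsGT (by linarith)
  -- bound for the smooth truncations
  have hbd : ∀ δ ∈ Set.Ioo 0 (a / 2),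
      |∫ y : E, φ δ ‖graphMap f y‖ / ‖graphMap f y‖ ^ m * g y| ≤ 2 * η := by
    intro δ hδ
    rw [integral_graph_support_mul_radial hf (hφ δ) (half_pos ha) (hφ0 δ hδ)]
    have hAm := measurable_angularMeasure (isOpen_supergraph hf.continuous)
    obtain ⟨i1, h1⟩ := abs_integral_deriv_step_mul_sub_le (contDiff_smoothStep a δ)
      (monotone_smoothStep a hδ.1) (a := a - δ) (by linarith [hδ.2]) (by linarith [hδ.1])
      (hac.trans_lt hcb) (fun t ht => smoothStep_eq_zero hδ.1 ht.le)
      (fun t ht => smoothStep_eq_one hδ.1 (le_of_lt ht)) hAm hA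
    obtain ⟨i2, h2⟩ := abs_integral_deriv_step_mul_sub_le (contDiff_smoothStep c δ)
      (monotone_smoothStep c hδ.1) (a := c - δ) (by linarith [hδ.2]) (by linarith [hδ.1])
      hcb (fun t ht => smoothStep_eq_zero hδ.1 ht.le)
      (fun t ht => smoothStep_eq_one hδ.1 (le_of_lt ht)) hAm hA
    have h3 : ∀ t, deriv (φ δ) t = deriv (smoothStep a δ) t - deriv (smoothStep c δ) t := fun t =>
      deriv_fun_sub ((contDiff_smoothStep a δ).differentiable one_ne_zero t)
        ((contDiff_smoothStep c δ).differentiable one_ne_zero t)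
    simp only [h3, sub_mul]
    rw [integral_sub i1 i2]
    rw [abs_le] at h1 h2 ⊢
    constructor <;> linarith [h1.1, h1.2, h2.1, h2.2]
  have hms : MeasurableSet {y : E | ‖graphMap f y‖ ∈ Set.Ico a c} :=
    hρ.measurable measurableSet_Ico
  have hlim : Tendsto (fun δ => ∫ y : E, φ δ ‖graphMap f y‖ / ‖graphMap f y‖ ^ m * g y) (𝓝[>] 0)
      (𝓝 (∫ y in {y : E | ‖graphMap f y‖ ∈ Set.Ico a c}, g y / ‖graphMap f y‖ ^ m)) := by
    rw [← integral_indicator hms]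
    refine tendsto_integral_filter_of_dominated_convergence
      ((closedBall (0 : E) c).indicator fun _ => 1 / (a / 2) ^ m * (|f 0| + 2 * K * c)) ?_ ?_ ?_ ?_
    · refine .of_forall fun δ => ?_
      have h1 := (hφ δ).continuous.measurable
      have h2 := hρ.measurable
      have : Measurable fun y : E => φ δ ‖graphMap f y‖ / ‖graphMap f y‖ ^ m * g y :=
        ((h1.comp h2).div (h2.pow_const m)).mul hgm
      exact this.aestronglyMeasurable
    · filter_upwards [hsmall] with δ hδ
      refine .of_forall fun y => ?_
      by_cases hy : ‖graphMap f y‖ ∈ Set.Icc (a / 2) c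
      · have h1 : ‖y‖ ≤ c := (norm_l2prod_fst_le (graphMap f y)).trans hy.2
        have h2 := hy.1
        rw [Set.indicator_of_mem (by simpa using h1), norm_mul, norm_div, norm_pow, norm_norm]
        have h3 : ‖g y‖ ≤ |f 0| + 2 * K * c := (hf.abs_graph_support_le y).trans (by gcongr)
        have h4 : ‖φ δ ‖graphMap f y‖‖ ≤ 1 := hφ1 δ _
        gcongr
      · rw [hφ0 δ hδ _ hy]
        have : 0 < c := ha.trans_le hac
        simpa using Set.indicator_nonneg (fun _ _ => by positivity) y
    · exact (integrable_indicator_iff measurableSet_closedBall).2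
        (integrableOn_const measure_closedBall_lt_top.ne)
    · refine .of_forall fun y => ?_
      have h1 := ((tendsto_smoothStep a ‖graphMap f y‖).sub
        (tendsto_smoothStep c ‖graphMap f y‖)).div_const (‖graphMap f y‖ ^ m) |>.mul_const (g y)
      refine h1.trans (le_of_eq ?_)
      congr 1
      by_cases h2 : a ≤ ‖graphMap f y‖
      · by_cases h3 : c ≤ ‖graphMap f y‖
        · simp [Set.indicator, h2, h3, h3.not_gt]
        · simp [Set.indicator, h2, h3, not_le.1 h3]
          ring
      · have h3 : ¬ c ≤ ‖graphMap f y‖ := fun h => h2 (hac.trans h)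
        simp [Set.indicator, h2, h3]
  refine le_of_tendsto hlim.abs ?_
  filter_upwards [hsmall] with δ hδ using hbd δ hδ

end Key

section Limit

variable {E : Type*} [NormedAddCommGroup E] [InnerProductSpace ℝ E] [FiniteDimensional ℝ E]
  [MeasurableSpace E] [BorelSpace E]

theorem measurableSet_graph_annulus {f : E → ℝ} (hf : Continuous f) (a b : ℝ) :
    MeasurableSet {y : E | ‖graphMap f y‖ ∈ Set.Ico a b} :=
  (isClosedEmbedding_graphMap hf).continuous.norm.measurable measurableSet_Ico

theorem graph_annulus_subset_closedBall (f : E → ℝ) (a b : ℝ) :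
    {y : E | ‖graphMap f y‖ ∈ Set.Ico a b} ⊆ closedBall 0 b := fun y hy => by
  simpa using (norm_l2prod_fst_le (graphMap f y)).trans (le_of_lt hy.2)

theorem integrableOn_graph_annulus {f : E → ℝ} {K : ℝ≥0} (hf : LipschitzWith K f)
    (μ : Measure E) [IsFiniteMeasureOnCompacts μ] {ψ : ℝ → ℝ} (hψ : Measurable ψ) {a b C : ℝ}
    (hC : ∀ t ∈ Set.Ico a b, |ψ t| ≤ C) :
    IntegrableOn (fun y => ψ ‖graphMap f y‖ * (fderiv ℝ f y y - f y))
      {y : E | ‖graphMap f y‖ ∈ Set.Ico a b} μ := by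
  have hms := measurableSet_graph_annulus hf.continuous a b
  have hρ := (isClosedEmbedding_graphMap hf.continuous).continuous.norm.measurable
  refine Measure.integrableOn_of_bounded (M := C * (|f 0| + 2 * K * b)) ?_ ?_ ?_
  · exact ((measure_mono (graph_annulus_subset_closedBall f a b)).trans_lt
      measure_closedBall_lt_top).ne
  · exact ((hψ.comp hρ).mul (measurable_graph_support f hf.continuous)).aestronglyMeasurable
  · refine (ae_restrict_iff' hms).2 (.of_forall fun y hy => ?_)
    have h1 : ‖y‖ ≤ b := by simpa using graph_annulus_subset_closedBall f a b hy
    have h2 : |fderiv ℝ f y y - f y| ≤ |f 0| + 2 * K * b :=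
      (hf.abs_graph_support_le y).trans (by gcongr)
    have h3 := hC _ hy
    rw [norm_mul]
    exact mul_le_mul h3 h2 (abs_nonneg _) ((abs_nonneg _).trans h3)

theorem abs_const_div_pow_le {a t : ℝ} (ha : 0 < a) (hat : a ≤ t) (m : ℕ) :
    |1 / t ^ m| ≤ 1 / a ^ m := by
  have : 0 < t := ha.trans_le hat
  rw [abs_of_pos (by positivity)]
  gcongr

theorem exists_tendsto_graph_solid_angle {f : E → ℝ} {K : ℝ≥0} (hf : LipschitzWith K f) {A₀ : ℝ}
    (hA : Tendsto (angularMeasure (supergraph f)) (𝓝[>] 0) (𝓝 A₀)) {b : ℝ} (hb : 0 < b) :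
    ∃ I, Tendsto (fun ε => ∫ y in {y : E | ‖graphMap f y‖ ∈ Set.Ico ε b},
      1 / ‖graphMap f y‖ ^ Module.finrank ℝ (WithLp 2 (E × ℝ)) * (fderiv ℝ f y y - f y))
      (𝓝[>] 0) (𝓝 I) := by
  set m := Module.finrank ℝ (WithLp 2 (E × ℝ))
  set J : ℝ → ℝ := fun ε => ∫ y in {y : E | ‖graphMap f y‖ ∈ Set.Ico ε b},
      1 / ‖graphMap f y‖ ^ m * (fderiv ℝ f y y - f y)
  have hint : ∀ a c, 0 < a → IntegrableOn
      (fun y => 1 / ‖graphMap f y‖ ^ m * (fderiv ℝ f y y - f y))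
      {y : E | ‖graphMap f y‖ ∈ Set.Ico a c} := fun a c ha =>
    integrableOn_graph_annulus hf volume (ψ := fun t => 1 / t ^ m) (by fun_prop)
      (C := 1 / a ^ m) fun t ht => abs_const_div_pow_le ha ht.1 m
  suffices h : Cauchy (map J (𝓝[>] 0)) from cauchy_map_iff_exists_tendsto.1 h
  refine Metric.cauchy_iff.2 ⟨inferInstance, fun η hη => ?_⟩
  obtain ⟨b', hb', hb'A⟩ : ∃ b' > 0, ∀ t ∈ Set.Ioo 0 b',
      |angularMeasure (supergraph f) t - A₀| ≤ η / 4 := by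
    have := (Metric.tendsto_nhds.1 hA (η / 4) (by positivity))
    obtain ⟨b', hb', h⟩ := mem_nhdsGT_iff_exists_Ioo_subset.1 this
    exact ⟨b', hb', fun t ht => le_of_lt (h ht)⟩
  refine ⟨J '' Set.Ioo 0 (min b b'), image_mem_map (Ioo_mem_nhdsGT (lt_min hb hb')), ?_⟩
  have key : ∀ s ∈ Set.Ioo 0 (min b b'), ∀ t ∈ Set.Ioo 0 (min b b'), s ≤ t →
      dist (J s) (J t) < η := by
    intro s hs t ht hst
    have hu : {y : E | ‖graphMap f y‖ ∈ Set.Ico s b} =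
        {y : E | ‖graphMap f y‖ ∈ Set.Ico s t} ∪ {y : E | ‖graphMap f y‖ ∈ Set.Ico t b} := by
      rw [← Set.Ico_union_Ico_eq_Ico hst (ht.2.le.trans (min_le_left _ _))]
      rfl
    have hdj : Disjoint {y : E | ‖graphMap f y‖ ∈ Set.Ico s t}
        {y : E | ‖graphMap f y‖ ∈ Set.Ico t b} :=
      Set.disjoint_left.2 fun y h1 h2 => absurd h1.2 (not_lt.2 h2.1)
    have h1 : J s - J t = ∫ y in {y : E | ‖graphMap f y‖ ∈ Set.Ico s t},
        1 / ‖graphMap f y‖ ^ m * (fderiv ℝ f y y - f y) := by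
      simp only [J]
      rw [hu, setIntegral_union hdj (measurableSet_graph_annulus hf.continuous _ _)
        (hint s t hs.1) (hint t b ht.1)]
      ring
    have h2 := abs_setIntegral_graph_support_le hf hs.1 hst (ht.2.trans_le (min_le_right _ _)) hb'A
    rw [Real.dist_eq, h1]
    refine lt_of_le_of_lt ?_ (show 2 * (η / 4) < η by linarith)
    simp only [one_div_mul_eq_div]
    exact h2
  rintro _ ⟨s, hs, rfl⟩ _ ⟨t, ht, rfl⟩
  rcases le_total s t with h | h
  · exact key s hs t ht h
  · rw [dist_comm]
    exact key t ht s hs h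

theorem tendsto_setIntegral_graph_annulus {f : E → ℝ} {K : ℝ≥0} (hf : LipschitzWith K f) (b : ℝ) :
    Tendsto (fun ε => ∫ y in {y : E | ‖graphMap f y‖ ∈ Set.Ico ε b}, (fderiv ℝ f y y - f y))
      (𝓝[>] 0) (𝓝 (∫ y in {y : E | ‖graphMap f y‖ ∈ Set.Ioo 0 b}, (fderiv ℝ f y y - f y))) := by
  have hρ := (isClosedEmbedding_graphMap hf.continuous).continuous.norm.measurable
  have hms : MeasurableSet {y : E | ‖graphMap f y‖ ∈ Set.Ioo 0 b} := hρ measurableSet_Ioo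
  have h0 : IntegrableOn (fun y => fderiv ℝ f y y - f y) {y : E | ‖graphMap f y‖ ∈ Set.Ico 0 b} := by
    simpa using integrableOn_graph_annulus hf volume (ψ := fun _ => 1) measurable_const (C := 1)
      (a := 0) (b := b) (by simp)
  simp_rw [← integral_indicator hms,
    ← fun ε => integral_indicator (μ := (volume : Measure E)) (f := fun y => fderiv ℝ f y y - f y)
      (measurableSet_graph_annulus hf.continuous ε b)]
  refine tendsto_integral_filter_of_dominated_convergence
    (fun y => ‖{y : E | ‖graphMap f y‖ ∈ Set.Ico 0 b}.indicator
      (fun y => fderiv ℝ f y y - f y) y‖) ?_ ?_ ?_ ?_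
  · exact .of_forall fun ε => ((measurable_graph_support f hf.continuous).indicator
      (measurableSet_graph_annulus hf.continuous ε b)).aestronglyMeasurable
  · filter_upwards [self_mem_nhdsWithin] with ε hε
    refine .of_forall fun y => ?_
    have hsub : {y : E | ‖graphMap f y‖ ∈ Set.Ico ε b} ⊆ {y : E | ‖graphMap f y‖ ∈ Set.Ico 0 b} :=
      fun z hz => Set.Ico_subset_Ico_left (le_of_lt hε) hz
    exact norm_indicator_le_of_subset hsub _ y
  · exact ((integrable_indicator_iff (measurableSet_graph_annulus hf.continuous 0 b)).2 h0).norm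
  · refine .of_forall fun y => tendsto_const_nhds.congr' ?_
    rcases (norm_nonneg (graphMap f y)).eq_or_lt with h | h
    · filter_upwards [self_mem_nhdsWithin] with ε hε
      have : ¬ ε ≤ 0 := not_le.2 hε
      simp [Set.indicator, ← h, this]
    · filter_upwards [nhdsWithin_le_nhds (Iio_mem_nhds h)] with ε hε
      simp [Set.indicator, h, le_of_lt (Set.mem_Iio.1 hε)]

/-- Existence of the principal value over a Lipschitz graph, in graph coordinates. -/
theorem exists_tendsto_graph_principal_value {f : E → ℝ} {K : ℝ≥0} (hf : LipschitzWith K f)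
    (μ : Measure E) [μ.IsAddHaarMeasure] {A₀ : ℝ}
    (hA : Tendsto (angularMeasure (supergraph f)) (𝓝[>] 0) (𝓝 A₀)) {b : ℝ} (hb : 0 < b) (R : ℝ) :
    ∃ I, Tendsto (fun ε => ∫ y in {y : E | ‖graphMap f y‖ ∈ Set.Ico ε b},
      (1 - R / ‖graphMap f y‖ ^ Module.finrank ℝ (WithLp 2 (E × ℝ))) * (fderiv ℝ f y y - f y) ∂μ)
      (𝓝[>] 0) (𝓝 I) := by
  set m := Module.finrank ℝ (WithLp 2 (E × ℝ))
  obtain ⟨I, hI⟩ := exists_tendsto_graph_solid_angle hf hA hb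
  have h1 := tendsto_setIntegral_graph_annulus hf b
  obtain ⟨s, hs⟩ : ∃ s : ℝ≥0, μ = s • volume := ⟨_, μ.isAddLeftInvariant_eq_smul volume⟩
  have h2 := (h1.sub (hI.const_mul R)).const_mul (s : ℝ)
  refine ⟨_, h2.congr' ?_⟩
  filter_upwards [self_mem_nhdsWithin] with ε hε
  have i1 : IntegrableOn (fun y => fderiv ℝ f y y - f y)
      {y : E | ‖graphMap f y‖ ∈ Set.Ico ε b} := by
    simpa using integrableOn_graph_annulus hf volume (ψ := fun _ => 1) measurable_const (C := 1)
      (a := ε) (b := b) (by simp)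
  have i2 := integrableOn_graph_annulus hf volume (ψ := fun t => 1 / t ^ m) (by fun_prop)
      (a := ε) (b := b) (C := 1 / ε ^ m) fun t ht => abs_const_div_pow_le hε ht.1 m
  rw [hs, Measure.restrict_smul, integral_smul_nnreal_measure,
    ← integral_const_mul, ← integral_sub i1 (i2.const_mul R), NNReal.smul_def, smul_eq_mul]
  congr 1
  refine integral_congr_ae (.of_forall fun y => ?_)
  simp only
  ring

end Limit

section LocalGraph

theorem mem_frontier_iff_of_eventually {X : Type*} [TopologicalSpace X] {s t : Set X} {x : X}
    (h : ∀ᶠ y in 𝓝 x, (y ∈ s ↔ y ∈ t)) : x ∈ frontier s ↔ x ∈ frontier t := by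
  simp only [frontier_eq_closure_inter_closure, Set.mem_inter_iff, mem_closure_iff_frequently,
    Set.mem_compl_iff]
  rw [frequently_congr h, frequently_congr (h.mono fun y hy => not_congr hy)]

variable {E : Type*} [NormedAddCommGroup E] [InnerProductSpace ℝ E] [FiniteDimensional ℝ E]
  [MeasurableSpace E] [BorelSpace E]

theorem frontier_supergraph {f : E → ℝ} (hf : Continuous f) :
    frontier (supergraph f) = Set.range (graphMap f) := by
  have c1 : Continuous fun v : WithLp 2 (E × ℝ) => v.fst :=
    continuous_fst.comp (WithLp.prod_continuous_ofLp 2 E ℝ)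
  have c2 : Continuous fun v : WithLp 2 (E × ℝ) => v.snd :=
    continuous_snd.comp (WithLp.prod_continuous_ofLp 2 E ℝ)
  apply Set.Subset.antisymm
  · intro x hx
    have := frontier_lt_subset_eq (hf.comp c1) c2 hx
    exact ⟨x.fst, l2prod_ext rfl this⟩
  · rintro _ ⟨y, rfl⟩
    rw [(isOpen_supergraph hf).frontier_eq]
    refine ⟨?_, fun h => lt_irrefl _ (mem_supergraph.1 h)⟩
    have hc : Continuous fun t : ℝ => graphMap f y + t • WithLp.toLp 2 ((0 : E), (1 : ℝ)) := by
      fun_prop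
    have hl : Tendsto (fun t : ℝ => graphMap f y + t • WithLp.toLp 2 ((0 : E), (1 : ℝ))) (𝓝[>] 0)
        (𝓝 (graphMap f y)) := by
      simpa using (hc.tendsto 0).mono_left nhdsWithin_le_nhds
    refine mem_closure_of_tendsto hl ?_
    filter_upwards [self_mem_nhdsWithin] with t ht
    rw [mem_supergraph]
    simpa using ht

theorem angularMeasure_eq_ratio_mul (G : Set (WithLp 2 (E × ℝ))) [Nontrivial E] {t : ℝ}
    (ht : 0 < t) :
    angularMeasure G t = (μH[Module.finrank ℝ E] (G ∩ sphere 0 t)).toReal /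
        (μH[Module.finrank ℝ E] (sphere (0 : WithLp 2 (E × ℝ)) t)).toReal *
      (volume : Measure (WithLp 2 (E × ℝ))).toSphere.real Set.univ := by
  have hnt : Nontrivial (WithLp 2 (E × ℝ)) :=
    ⟨WithLp.toLp 2 (0, 1), 0, fun h => by simpa using congrArg WithLp.snd h⟩
  have h0 : (volume : Measure (WithLp 2 (E × ℝ))).toSphere.real Set.univ ≠ 0 := by
    rw [Measure.toSphere_real_apply_univ]
    have h1 : 0 < Module.finrank ℝ (WithLp 2 (E × ℝ)) := Module.finrank_pos
    have h2 : 0 < (volume : Measure (WithLp 2 (E × ℝ))).real (ball 0 1) :=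
      ENNReal.toReal_pos (measure_ball_pos _ _ one_pos).ne' measure_ball_lt_top.ne
    positivity
  rw [hausdorffMeasure_sphere_ratio G ht, div_mul_cancel₀ _ h0, angularMeasure]

/-- Existence of the principal value for a set which is a Lipschitz supergraph near the origin. -/
theorem exists_tendsto_principal_value_of_local_graph [Nontrivial E] {f : E → ℝ} {K : ℝ≥0}
    (hf : LipschitzWith K f) {Ω : Set (WithLp 2 (E × ℝ))} {b₀ : ℝ} (hb₀ : 0 < b₀)
    (hΩ : ∀ x ∈ ball (0 : WithLp 2 (E × ℝ)) b₀, x ∈ Ω ↔ x ∈ supergraph f)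
    {ν : WithLp 2 (E × ℝ) → WithLp 2 (E × ℝ)}
    (hν : ∀ᵐ x ∂(μH[Module.finrank ℝ E] : Measure (WithLp 2 (E × ℝ))).restrict (frontier Ω),
      ‖ν x‖ = 1 ∧ ∀ w, ⟪w, ν x⟫ < 0 → ∀ᶠ t in 𝓝[>] (0 : ℝ), x + t • w ∈ Ω)
    {r : ℝ} (hr : 0 < r) {Γ : ℝ}
    (hΓ : Tendsto (fun ε : ℝ => (μH[Module.finrank ℝ E] (Ω ∩ sphere 0 ε)).toReal /
        (μH[Module.finrank ℝ E] (sphere (0 : WithLp 2 (E × ℝ)) ε)).toReal) (𝓝[>] 0) (𝓝 Γ)) :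
    ∃ I : ℝ, Tendsto (fun ε : ℝ => ∫ x in frontier Ω ∩ (ball 0 r \ ball 0 ε),
        (1 - r ^ Module.finrank ℝ (WithLp 2 (E × ℝ)) /
          ‖x‖ ^ Module.finrank ℝ (WithLp 2 (E × ℝ))) * ⟪x, ν x⟫ ∂μH[Module.finrank ℝ E])
      (𝓝[>] 0) (𝓝 I) := by
  set m := Module.finrank ℝ (WithLp 2 (E × ℝ))
  set d := Module.finrank ℝ E
  set H : WithLp 2 (E × ℝ) → ℝ := fun x => (1 - r ^ m / ‖x‖ ^ m) * ⟪x, ν x⟫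
  have hfront : ∀ x ∈ ball (0 : WithLp 2 (E × ℝ)) b₀,
      x ∈ frontier Ω ↔ x ∈ Set.range (graphMap f) := by
    intro x hx
    rw [← frontier_supergraph hf.continuous]
    refine mem_frontier_iff_of_eventually ?_
    filter_upwards [isOpen_ball.mem_nhds hx] with y hy using hΩ y hy
  -- the angular measure of the supergraph converges
  have hA : Tendsto (angularMeasure (supergraph f)) (𝓝[>] 0)
      (𝓝 (Γ * (volume : Measure (WithLp 2 (E × ℝ))).toSphere.real Set.univ)) := by
    refine (hΓ.mul_const _).congr' ?_
    filter_upwards [Ioo_mem_nhdsGT hb₀] with t ht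
    rw [← angularMeasure_eq_ratio_mul Ω ht.1, angularMeasure, angularMeasure]
    congr 1
    ext θ
    refine hΩ _ ?_
    rw [mem_ball_zero_iff, norm_smul, norm_eq_of_mem_sphere, mul_one, Real.norm_of_nonneg ht.1.le]
    exact ht.2
  -- the normal in graph coordinates
  have hsupp : ∀ᵐ y ∂(μH[d] : Measure E), graphMap f y ∈ ball (0 : WithLp 2 (E × ℝ)) b₀ →
      graphJacobian (fderiv ℝ f y) * H (graphMap f y) =
        (1 - r ^ m / ‖graphMap f y‖ ^ m) * (fderiv ℝ f y y - f y) := by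
    have h1 := (ae_restrict_iff' isClosed_frontier.measurableSet).1 hν
    have h2 : ∀ᵐ x ∂(μH[d] : Measure (WithLp 2 (E × ℝ))).restrict (Set.range (graphMap f)),
        x ∈ ball 0 b₀ →
          ‖ν x‖ = 1 ∧ ∀ w, ⟪w, ν x⟫ < 0 → ∀ᶠ t in 𝓝[>] (0 : ℝ), x + t • w ∈ Ω := by
      have hrm : MeasurableSet (Set.range (graphMap f)) :=
        (isClosedEmbedding_graphMap hf.continuous).isClosed_range.measurableSet
      filter_upwards [ae_restrict_of_ae h1, ae_restrict_mem hrm] with x hx hx' hxb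
      exact hx ((hfront x hxb).2 hx')
    filter_upwards [(ae_graph_iff hf).1 h2, hf.ae_differentiableAt (μ := μH[d])] with y hy hyd hyb
    have hev : ∀ᶠ x in 𝓝 (graphMap f y), x ∈ Ω → f x.fst < x.snd := by
      filter_upwards [isOpen_ball.mem_nhds hyb] with x hx using (hΩ x hx).1
    rw [← graphJacobian_mul_inner_normal hyd hev (hy hyb).1 (hy hyb).2]
    simp only [H]
    ring
  set b := min r (b₀ / 2)
  have hb : 0 < b := lt_min hr (half_pos hb₀)
  have hbb₀ : b < b₀ := (min_le_right _ _).trans_lt (half_lt_self hb₀)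
  have hbr : b ≤ r := min_le_left _ _
  have hBm : ∀ ε, MeasurableSet (ball (0 : WithLp 2 (E × ℝ)) b \ ball 0 ε) := fun ε =>
    measurableSet_ball.diff measurableSet_ball
  have hpre : ∀ ε, graphMap f ⁻¹' (ball 0 b \ ball 0 ε) = {y | ‖graphMap f y‖ ∈ Set.Ico ε b} := by
    intro ε
    ext y
    simp [and_comm]
  have hset : ∀ ε, frontier Ω ∩ (ball 0 b \ ball 0 ε) =
      Set.range (graphMap f) ∩ (ball 0 b \ ball 0 ε) := by
    intro ε
    ext x
    refine and_congr_left fun hx => hfront x (ball_subset_ball hbb₀.le hx.1)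
  have hsupp' : ∀ ε, ∀ᵐ y ∂(μH[d] : Measure E).restrict {y | ‖graphMap f y‖ ∈ Set.Ico ε b},
      (1 - r ^ m / ‖graphMap f y‖ ^ m) * (fderiv ℝ f y y - f y) =
        graphJacobian (fderiv ℝ f y) * H (graphMap f y) := by
    intro ε
    filter_upwards [ae_restrict_of_ae hsupp,
      ae_restrict_mem (measurableSet_graph_annulus hf.continuous ε b)] with y hy hy'
    exact (hy (by simpa using (Set.mem_Ico.1 hy').2.trans hbb₀)).symm
  -- the inner part
  obtain ⟨I, hI⟩ := exists_tendsto_graph_principal_value hf (μH[d] : Measure E) hA hb (r ^ m)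
  have hin : Tendsto (fun ε => ∫ x in frontier Ω ∩ (ball 0 b \ ball 0 ε), H x ∂μH[d])
      (𝓝[>] 0) (𝓝 I) := by
    refine hI.congr fun ε => ?_
    rw [hset, setIntegral_graph hf (hBm ε), hpre]
    exact integral_congr_ae (hsupp' ε)
  have hini : ∀ ε > 0, IntegrableOn H (frontier Ω ∩ (ball 0 b \ ball 0 ε)) μH[d] := by
    intro ε hε
    rw [hset, integrableOn_graph_iff hf (hBm ε), hpre]
    refine Integrable.congr ?_ (hsupp' ε)
    refine integrableOn_graph_annulus hf (μH[d] : Measure E)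
      (ψ := fun t => 1 - r ^ m / t ^ m) (by fun_prop) (C := 1 + r ^ m * (1 / ε ^ m)) fun t ht => ?_
    have h1 := abs_const_div_pow_le hε ht.1 m
    refine (abs_sub _ _).trans ?_
    rw [abs_one, div_eq_mul_one_div, abs_mul, abs_of_pos (pow_pos hr m)]
    gcongr
  -- the outer part
  have hsplit : ∀ ε ∈ Set.Ioo 0 b, frontier Ω ∩ (ball 0 r \ ball 0 ε) =
      frontier Ω ∩ (ball 0 r \ ball 0 b) ∪ frontier Ω ∩ (ball 0 b \ ball 0 ε) := by
    intro ε hε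
    rw [← Set.inter_union_distrib_left,
      Set.sdiff_union_sdiff_cancel (ball_subset_ball hbr) (ball_subset_ball hε.2.le)]
  have hdisj : ∀ ε, Disjoint (frontier Ω ∩ (ball 0 r \ ball 0 b))
      (frontier Ω ∩ (ball 0 b \ ball 0 ε)) := fun ε =>
    Set.disjoint_left.2 fun x h1 h2 => h1.2.2 h2.2.1
  by_cases hout : IntegrableOn H (frontier Ω ∩ (ball 0 r \ ball 0 b)) μH[d]
  · refine ⟨_, (hin.const_add (∫ x in frontier Ω ∩ (ball 0 r \ ball 0 b), H x ∂μH[d])).congr' ?_⟩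
    filter_upwards [Ioo_mem_nhdsGT hb] with ε hε
    rw [hsplit ε hε, setIntegral_union (hdisj ε)
      (isClosed_frontier.measurableSet.inter (hBm ε)) hout (hini ε hε.1)]
  · refine ⟨0, tendsto_const_nhds.congr' ?_⟩
    filter_upwards [Ioo_mem_nhdsGT hb] with ε hε
    refine (integral_undef fun h => hout ?_).symm
    exact IntegrableOn.mono_set h (by rw [hsplit ε hε]; exact Set.subset_union_left)

end LocalGraph

section Transfer

theorem norm_sq_firstCoords_add_lastCoord {n : ℕ} (hn : 0 < n) (x : EuclideanSpace ℝ (Fin n)) :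
    ‖firstCoords x‖ ^ 2 + lastCoord x ^ 2 = ‖x‖ ^ 2 := by
  obtain ⟨k, rfl⟩ : ∃ k, n = k + 1 := ⟨n - 1, by omega⟩
  rw [EuclideanSpace.norm_sq_eq, EuclideanSpace.norm_sq_eq x, Fin.sum_univ_castSucc]
  simp only [Real.norm_eq_abs, sq_abs]
  congr 1

theorem finrank_l2prod_euclideanSpace {n : ℕ} (hn : 0 < n) :
    Module.finrank ℝ (WithLp 2 (EuclideanSpace ℝ (Fin (n - 1)) × ℝ)) = n := by
  rw [(WithLp.linearEquiv 2 ℝ (EuclideanSpace ℝ (Fin (n - 1)) × ℝ)).finrank_eq]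
  simp
  omega

/-- Splitting off the last coordinate, as a linear isometry of `ℝⁿ` onto `ℝⁿ⁻¹ × ℝ`. -/
def splitLastCoord {n : ℕ} (hn : 0 < n) :
    EuclideanSpace ℝ (Fin n) ≃ₗᵢ[ℝ] WithLp 2 (EuclideanSpace ℝ (Fin (n - 1)) × ℝ) :=
  LinearIsometry.toLinearIsometryEquiv
    { toFun := fun x => WithLp.toLp 2 (firstCoords x, lastCoord x)
      map_add' := fun x y => l2prod_ext rfl (by simp [lastCoord, hn])
      map_smul' := fun c x => l2prod_ext rfl (by simp [lastCoord, hn])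
      norm_map' := fun x => by
        rw [← sq_eq_sq₀ (norm_nonneg _) (norm_nonneg _), WithLp.prod_norm_sq_eq_of_L2,
          ← norm_sq_firstCoords_add_lastCoord hn x]
        simp }
    (by rw [finrank_l2prod_euclideanSpace hn, finrank_euclideanSpace_fin])

end Transfer

/-- Under the hypotheses of Theorem 3.1 (in particular, assuming the limit
`Γ(p)` exists), the principal value
`lim_{ε→0⁺} ∫_{S ∩ (B_r(p) ∖ B_ε(p))} (1 - rⁿ/|x-p|ⁿ)(x-p)·ν dH^{n-1}` exists and is finite. -/
theorem principal_value_integral_exists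
    (n : ℕ) (hn : 2 ≤ n)
    (Ω : Set (EuclideanSpace ℝ (Fin n))) (hΩo : IsOpen Ω)
    (hΩb : Bornology.IsBounded Ω) (hΩl : HasLipschitzBoundary Ω)
    (p : EuclideanSpace ℝ (Fin n)) (hp : p ∈ frontier Ω)
    (ν : EuclideanSpace ℝ (Fin n) → EuclideanSpace ℝ (Fin n))
    (hν : ∀ᵐ x ∂(μH[(n : ℝ) - 1].restrict (frontier Ω)), IsOutwardNormalAt Ω x (ν x))
    (r : ℝ) (hr : 0 < r)
    (Γ : ℝ)
    (hΓ : Tendsto (fun ε : ℝ =>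
        (μH[(n : ℝ) - 1] (Ω ∩ sphere p ε)).toReal / (μH[(n : ℝ) - 1] (sphere p ε)).toReal)
      (𝓝[>] 0) (𝓝 Γ)) :
    ∃ I : ℝ, Tendsto (fun ε : ℝ =>
        ∫ x in frontier Ω ∩ (ball p r \ ball p ε),
          (1 - r ^ n / ‖x - p‖ ^ n) * ⟪x - p, ν x⟫ ∂μH[(n : ℝ) - 1])
      (𝓝[>] 0) (𝓝 I) := by
  obtain ⟨A, f, K, U, hAp, hf, hUo, hpU, hU⟩ := hΩl p hp
  have hn0 : 0 < n := by omega
  have : NeZero (n - 1) := ⟨by omega⟩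
  let T := A.trans (splitLastCoord hn0).toAffineIsometryEquiv
  let S : WithLp 2 (EuclideanSpace ℝ (Fin (n - 1)) × ℝ) ≃ᵢ EuclideanSpace ℝ (Fin n) :=
    T.symm.toIsometryEquiv
  let L := T.symm.linearIsometryEquiv
  have hT : ∀ x, T x = WithLp.toLp 2 (firstCoords (A x), lastCoord (A x)) := fun x => rfl
  have hTS : ∀ v, T (S v) = v := fun v => T.apply_symm_apply v
  have hTp : T p = 0 := by
    change splitLastCoord hn0 (A p) = 0
    rw [hAp, map_zero]
  have hS0 : S 0 = p := by
    rw [← hTp]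
    exact T.symm_apply_apply p
  have hSsymm : S.symm p = 0 := by rw [← hS0, S.symm_apply_apply]
  have hSadd : ∀ v w, S (v + w) = S v + L w := fun v w => by
    have := T.symm.map_vadd v w
    rw [vadd_eq_add, vadd_eq_add, add_comm, add_comm (T.symm.linearIsometryEquiv w)] at this
    exact this
  have hSsub : ∀ v, S v - p = L v := fun v => by
    rw [← zero_add v, hSadd, hS0, zero_add, add_sub_cancel_left]
  have hd : (n : ℝ) - 1 =
      (Module.finrank ℝ (EuclideanSpace ℝ (Fin (n - 1))) : ℝ) := by
    rw [finrank_euclideanSpace_fin, Nat.cast_sub (by omega), Nat.cast_one]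
  rw [hd] at hν hΓ ⊢
  have hball : ∀ ε, S ⁻¹' ball p ε = ball 0 ε := fun ε => by rw [S.preimage_ball, hSsymm]
  have hsphere : ∀ ε, S ⁻¹' sphere p ε = sphere 0 ε := fun ε => by rw [S.preimage_sphere, hSsymm]
  have hfr : frontier (S ⁻¹' Ω) = S ⁻¹' frontier Ω := (S.toHomeomorph.preimage_frontier Ω).symm
  have hmp := S.measurePreserving_hausdorffMeasure
    (Module.finrank ℝ (EuclideanSpace ℝ (Fin (n - 1))) : ℝ)
  have hemb := S.toHomeomorph.measurableEmbedding
  obtain ⟨b, hb, hbU⟩ := Metric.isOpen_iff.1 hUo p hpU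
  have hΩ : ∀ v ∈ ball 0 b, v ∈ S ⁻¹' Ω ↔ v ∈ supergraph f := by
    intro v hv
    rw [← hball] at hv
    rw [Set.mem_preimage, hU _ (hbU hv), mem_supergraph]
    conv_rhs => rw [← hTS v, hT]
    exact Iff.rfl
  have hν' : ∀ᵐ v ∂(μH[Module.finrank ℝ (EuclideanSpace ℝ (Fin (n - 1)))]).restrict
      (frontier (S ⁻¹' Ω)), ‖L.symm (ν (S v))‖ = 1 ∧
        ∀ w, ⟪w, L.symm (ν (S v))⟫ < 0 → ∀ᶠ t in 𝓝[>] (0 : ℝ), v + t • w ∈ S ⁻¹' Ω := by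
    rw [hfr]
    filter_upwards [(hmp.restrict_preimage_emb hemb (frontier Ω)).quasiMeasurePreserving.ae hν]
      with v hv
    refine ⟨by rw [L.symm.norm_map]; exact hv.1, fun w hw => ?_⟩
    have hw' : ⟪L w, ν (S v)⟫ < 0 := by
      rwa [← L.symm.inner_map_map, L.symm_apply_apply]
    filter_upwards [(hv.2 (L w)).1 hw'] with t ht
    rwa [Set.mem_preimage, hSadd, map_smul]
  have hΓ' := hΓ
  simp only [← S.hausdorffMeasure_preimage, Set.preimage_inter, hsphere] at hΓ'
  obtain ⟨I, hI⟩ := exists_tendsto_principal_value_of_local_graph hf hb hΩ hν' hr hΓ'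
  refine ⟨I, hI.congr fun ε => ?_⟩
  rw [← hmp.setIntegral_preimage_emb hemb, finrank_l2prod_euclideanSpace hn0, Set.preimage_inter,
    Set.preimage_sdiff, hball, hball, hfr]
  congr 1 with v
  rw [hSsub, L.norm_map, ← L.symm.inner_map_map, L.symm_apply_apply]
end
end

section
/- Define f : ℝ → ℝ by f(0) = 0 and f(x) = |x| sin(log|x|) for x ≠ 0, and let Ω = {(x, y) ∈ ℝ² : y > f(x)}. Then f is Lipschitz, and the limit lim_{ε→0⁺} H¹(Ω ∩ ∂B_ε(0)) / H¹(∂B_ε(0)) does not exist; in particular, the quantity Γ(p) defined by this limit fails to exist at the boundary point p = 0 of Ω. -/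
open MeasureTheory Metric Filter Real
open scoped Topology ENNReal NNReal Pointwise

noncomputable section

lemma abs_mul_sin_log_sub_le {x y : ℝ} (hy : 0 ≤ y) (hyx : y ≤ x) :
    |x * sin (log x) - y * sin (log y)| ≤ 2 * (x - y) := by
  rcases hy.eq_or_lt with rfl | hy
  · rw [zero_mul, sub_zero, abs_mul, abs_of_nonneg hyx]
    nlinarith [abs_sin_le_one (log x)]
  have hx : 0 < x := hy.trans_le hyx
  have hlog : y * |log x - log y| ≤ x - y := by
    rw [abs_of_nonneg (sub_nonneg.2 (log_le_log hy hyx)), ← log_div hx.ne' hy.ne']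
    calc y * log (x / y) ≤ y * (x / y - 1) := by
          gcongr
          exact log_le_sub_one_of_pos (by positivity)
      _ = x - y := by field_simp
  have hsin : |sin (log x) - sin (log y)| ≤ |log x - log y| := by
    simpa [dist_eq] using lipschitzWith_sin.dist_le_mul (log x) (log y)
  calc |x * sin (log x) - y * sin (log y)|
      = |(x - y) * sin (log x) + y * (sin (log x) - sin (log y))| := by ring_nf
    _ ≤ |(x - y) * sin (log x)| + |y * (sin (log x) - sin (log y))| := abs_add_le _ _
    _ = (x - y) * |sin (log x)| + y * |sin (log x) - sin (log y)| := by
        rw [abs_mul, abs_mul, abs_of_nonneg (sub_nonneg.2 hyx), abs_of_pos hy]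
    _ ≤ (x - y) * 1 + y * |log x - log y| := by
        gcongr
        exact abs_sin_le_one _
    _ ≤ 2 * (x - y) := by linarith

lemma lipschitzWith_abs_mul_sin_log :
    LipschitzWith 2 fun x : ℝ => |x| * sin (log |x|) := by
  refine LipschitzWith.of_dist_le_mul fun x y => ?_
  have h := abs_abs_sub_abs_le_abs_sub x y
  simp only [dist_eq, NNReal.coe_ofNat]
  rcases le_total |y| |x| with hyx | hxy
  · have := abs_mul_sin_log_sub_le (abs_nonneg y) hyx
    linarith [le_abs_self (|x| - |y|)]
  · have := abs_mul_sin_log_sub_le (abs_nonneg x) hxy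
    rw [abs_sub_comm (|x| * _)]
    linarith [neg_abs_le (|x| - |y|)]

/-- The part of the unit circle above the graph of `x ↦ |x| sin (log |x| + s)`. -/
def circleAbove (s : ℝ) : Set (EuclideanSpace ℝ (Fin 2)) :=
  {q | |q 0| * sin (log |q 0| + s) < q 1} ∩ sphere 0 1

lemma sphere_eq_smul {ε : ℝ} (hε : 0 < ε) :
    sphere (0 : EuclideanSpace ℝ (Fin 2)) ε = ε • sphere (0 : EuclideanSpace ℝ (Fin 2)) 1 := by
  rw [smul_sphere' hε.ne', smul_zero, norm_of_nonneg hε.le, mul_one]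

lemma epigraph_inter_sphere_eq_smul {ε : ℝ} (hε : 0 < ε) :
    {q : EuclideanSpace ℝ (Fin 2) | |q 0| * sin (log |q 0|) < q 1} ∩ sphere 0 ε =
      ε • circleAbove (log ε) := by
  rw [circleAbove, Set.smul_set_inter₀ hε.ne', ← sphere_eq_smul hε]
  congr 1
  ext q
  rw [Set.mem_smul_set_iff_inv_smul_mem₀ hε.ne']
  simp only [Set.mem_ofPred_eq, PiLp.smul_apply, smul_eq_mul, abs_mul, abs_of_pos (inv_pos.2 hε)]
  rcases eq_or_ne (q 0) 0 with h | h
  · simp [h, hε]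
  · rw [log_mul (inv_pos.2 hε).ne' (abs_ne_zero.2 h), log_inv,
      show -log ε + log |q 0| + log ε = log |q 0| by ring, mul_assoc,
      mul_lt_mul_iff_right₀ (inv_pos.2 hε)]

lemma hausdorffMeasure_ratio_eq {ε : ℝ} (hε : 0 < ε) :
    (μH[(1 : ℝ)] ({q : EuclideanSpace ℝ (Fin 2) | |q 0| * sin (log |q 0|) < q 1} ∩
        sphere 0 ε)).toReal / (μH[(1 : ℝ)] (sphere (0 : EuclideanSpace ℝ (Fin 2)) ε)).toReal =
      (μH[(1 : ℝ)] (circleAbove (log ε))).toReal /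
        (μH[(1 : ℝ)] (sphere (0 : EuclideanSpace ℝ (Fin 2)) 1)).toReal := by
  rw [epigraph_inter_sphere_eq_smul hε, sphere_eq_smul hε,
    Measure.hausdorffMeasure_smul₀ zero_le_one hε.ne',
    Measure.hausdorffMeasure_smul₀ zero_le_one hε.ne']
  simp only [NNReal.rpow_one, ENNReal.smul_def, smul_eq_mul, ENNReal.toReal_mul]
  exact mul_div_mul_left _ _ (by simpa using hε.ne')

lemma mem_unitSphere_iff (q : EuclideanSpace ℝ (Fin 2)) :
    q ∈ sphere (0 : EuclideanSpace ℝ (Fin 2)) 1 ↔ q 0 ^ 2 + q 1 ^ 2 = 1 := by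
  simp [EuclideanSpace.norm_eq, Fin.sum_univ_two]

lemma hausdorffMeasure_unitSphere_lt_top :
    μH[(1 : ℝ)] (sphere (0 : EuclideanSpace ℝ (Fin 2)) 1) < ∞ := by
  have hsub : sphere (0 : EuclideanSpace ℝ (Fin 2)) 1 ⊆
      (fun t : ℝ => (!₂[cos t, sin t] : EuclideanSpace ℝ (Fin 2))) '' Set.Icc (-π) π := by
    intro q hq
    rw [mem_unitSphere_iff] at hq
    have hn : ‖(⟨q 0, q 1⟩ : ℂ)‖ = 1 := by
      rw [← sq_eq_sq₀ (norm_nonneg _) zero_le_one, Complex.sq_norm, Complex.normSq_mk]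
      linarith
    refine ⟨Complex.arg ⟨q 0, q 1⟩, ⟨(Complex.neg_pi_lt_arg _).le, Complex.arg_le_pi _⟩, ?_⟩
    have hc := Complex.norm_mul_cos_arg ⟨q 0, q 1⟩
    have hs := Complex.norm_mul_sin_arg ⟨q 0, q 1⟩
    rw [hn, one_mul] at hc hs
    ext i
    fin_cases i <;> simp [hc, hs]
  have hlip : LipschitzWith 2 fun t : ℝ => (!₂[cos t, sin t] : EuclideanSpace ℝ (Fin 2)) := by
    refine LipschitzWith.of_dist_le_mul fun x y => ?_
    have hc : |cos x - cos y| ≤ |x - y| := by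
      simpa [dist_eq] using lipschitzWith_cos.dist_le_mul x y
    have hs : |sin x - sin y| ≤ |x - y| := by
      simpa [dist_eq] using lipschitzWith_sin.dist_le_mul x y
    rw [EuclideanSpace.dist_eq]
    refine sqrt_le_iff.2 ⟨by positivity, ?_⟩
    simp only [Fin.sum_univ_two, dist_eq, NNReal.coe_ofNat, Matrix.cons_val_zero,
      Matrix.cons_val_one]
    nlinarith [abs_nonneg (cos x - cos y), abs_nonneg (sin x - sin y)]
  refine (measure_mono hsub).trans_lt
    ((hlip.hausdorffMeasure_image_le zero_le_one _).trans_lt ?_)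
  rw [hausdorffMeasure_real, Real.volume_Icc]
  exact ENNReal.mul_lt_top (by simp) ENNReal.ofReal_lt_top

lemma circleAbove_subset :
    circleAbove (π / 2) ⊆ circleAbove (-(π / 2)) := by
  rintro q ⟨hq, hs⟩
  refine ⟨?_, hs⟩
  rw [mem_unitSphere_iff] at hs
  simp only [Set.mem_ofPred_eq, sin_add_pi_div_two, ← sub_eq_add_neg, sin_sub_pi_div_two] at hq ⊢
  rcases le_or_gt 0 (cos (log |q 0|)) with hc | hc
  · nlinarith [abs_nonneg (q 0)]
  have h0 : |q 0| ≠ 0 := by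
    intro h
    simp [h] at hc
    linarith
  have hx : 0 < |q 0| := lt_of_le_of_ne (abs_nonneg _) h0.symm
  have hx1 : |q 0| ≤ 1 := by
    rw [← sq_le_one_iff₀ hx.le, sq_abs]
    nlinarith [sq_nonneg (q 1)]
  have hlog : log |q 0| < -1 := by
    by_contra! hge
    refine hc.not_ge (cos_nonneg_of_mem_Icc ⟨?_, ?_⟩)
    · linarith [pi_gt_three]
    · linarith [pi_gt_three, log_nonpos hx.le hx1]
  have hhalf : |q 0| < 1 / 2 := by
    rw [log_lt_iff_lt_exp hx] at hlog
    linarith [exp_neg_one_lt_half]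
  have hlow : -|q 0| ≤ |q 0| * cos (log |q 0|) := by
    nlinarith [neg_one_le_cos (log |q 0|)]
  have hy : |q 0| < q 1 := by
    have : q 0 ^ 2 = |q 0| ^ 2 := (sq_abs _).symm
    nlinarith
  nlinarith [neg_one_le_cos (log |q 0|)]

/-- A short arc of the unit circle around the point `(1, 0)`. -/
def rightArc : Set (EuclideanSpace ℝ (Fin 2)) :=
  {q | 0 ≤ q 0 ∧ |q 1| ≤ 1 / 2} ∩ sphere 0 1

lemma abs_lt_of_mem_rightArc {q : EuclideanSpace ℝ (Fin 2)} (hq : q ∈ rightArc) :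
    |q 1| < |q 0| * cos (log |q 0|) := by
  obtain ⟨⟨h0, h1⟩, hs⟩ := hq
  rw [mem_unitSphere_iff] at hs
  rw [abs_of_nonneg h0]
  have hy : q 1 ^ 2 ≤ (1 / 2) ^ 2 := by
    rw [← sq_abs]
    gcongr
  have hx : 2 / 3 ≤ q 0 := by nlinarith
  have hx1 : q 0 ≤ 1 := by nlinarith [sq_nonneg (q 1)]
  have hlog : -(1 / 2) ≤ log (q 0) := by
    have := one_sub_inv_le_log_of_pos (by linarith : 0 < q 0)
    have : (q 0)⁻¹ ≤ (2 / 3 : ℝ)⁻¹ := by gcongr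
    norm_num at this
    linarith
  have hlog0 : log (q 0) ≤ 0 := log_nonpos h0 hx1
  have hcos : 7 / 8 ≤ cos (log (q 0)) := by
    nlinarith [one_sub_sq_div_two_le_cos (x := log (q 0))]
  nlinarith

lemma hausdorffMeasure_rightArc_pos : 0 < μH[(1 : ℝ)] rightArc := by
  have himg : Set.Icc (-(1 / 2) : ℝ) (1 / 2) ⊆
      (fun q : EuclideanSpace ℝ (Fin 2) => q 1) '' rightArc := by
    intro y hy
    have hy2 : y ^ 2 ≤ 1 := by nlinarith [hy.1, hy.2]
    refine ⟨!₂[√(1 - y ^ 2), y], ⟨⟨by simp, by simpa [abs_le] using hy⟩, ?_⟩, by simp⟩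
    rw [mem_unitSphere_iff]
    simp [sq_sqrt (sub_nonneg.2 hy2)]
  have hlip : LipschitzWith 1 fun q : EuclideanSpace ℝ (Fin 2) => q 1 :=
    LipschitzWith.of_dist_le_mul fun p q => by
      simpa [dist_eq_norm] using PiLp.norm_apply_le (p - q) 1
  have h := (measure_mono himg).trans (hlip.hausdorffMeasure_image_le zero_le_one rightArc)
  rw [hausdorffMeasure_real, Real.volume_Icc] at h
  simp only [ENNReal.coe_one, ENNReal.one_rpow, one_mul] at h
  exact lt_of_lt_of_le (by simp) h

lemma measurableSet_rightArc : MeasurableSet rightArc := by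
  refine MeasurableSet.inter (IsClosed.measurableSet ?_) isClosed_sphere.measurableSet
  have h0 : Continuous fun q : EuclideanSpace ℝ (Fin 2) => q 0 := by fun_prop
  have h1 : Continuous fun q : EuclideanSpace ℝ (Fin 2) => |q 1| := by fun_prop
  exact (isClosed_le continuous_const h0).inter (isClosed_le h1 continuous_const)

lemma hausdorffMeasure_circleAbove_lt :
    μH[(1 : ℝ)] (circleAbove (π / 2)) < μH[(1 : ℝ)] (circleAbove (-(π / 2))) := by
  have hdisj : Disjoint (circleAbove (π / 2)) rightArc := by
    refine Set.disjoint_left.2 fun q hq hqa => ?_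
    have h := hq.1
    simp only [Set.mem_ofPred_eq, sin_add_pi_div_two] at h
    linarith [abs_lt_of_mem_rightArc hqa, le_abs_self (q 1)]
  have hsub : rightArc ⊆ circleAbove (-(π / 2)) := by
    refine fun q hq => ⟨?_, hq.2⟩
    simp only [Set.mem_ofPred_eq, ← sub_eq_add_neg, sin_sub_pi_div_two]
    linarith [abs_lt_of_mem_rightArc hq, neg_abs_le (q 1)]
  have hfin : μH[(1 : ℝ)] (circleAbove (π / 2)) ≠ ∞ :=
    ((measure_mono Set.inter_subset_right).trans_lt hausdorffMeasure_unitSphere_lt_top).ne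
  calc μH[(1 : ℝ)] (circleAbove (π / 2))
      < μH[(1 : ℝ)] (circleAbove (π / 2)) + μH[(1 : ℝ)] rightArc :=
        ENNReal.lt_add_right hfin hausdorffMeasure_rightArc_pos.ne'
    _ = μH[(1 : ℝ)] (circleAbove (π / 2) ∪ rightArc) :=
        (measure_union hdisj measurableSet_rightArc).symm
    _ ≤ _ := measure_mono (Set.union_subset circleAbove_subset hsub)

lemma circleAbove_sub_nat_mul_two_pi (s : ℝ) (n : ℕ) :
    circleAbove (s - n * (2 * π)) = circleAbove s := by
  simp only [circleAbove, ← add_sub_assoc, sin_sub_nat_mul_two_pi]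

lemma tendsto_exp_sub_nat_mul_two_pi (s : ℝ) :
    Tendsto (fun n : ℕ => exp (s - n * (2 * π))) atTop (𝓝[>] 0) := by
  refine tendsto_nhdsWithin_iff.2 ⟨tendsto_exp_atBot.comp ?_, .of_forall fun n => exp_pos _⟩
  simp only [sub_eq_add_neg]
  exact tendsto_atBot_add_const_left _ _ (tendsto_neg_atTop_atBot.comp
    (tendsto_natCast_atTop_atTop.atTop_mul_const two_pi_pos))

/-- **Remark 2.3.** For the Lipschitz function `f(x) = |x| sin(log|x|)`
(with `f(0) = 0`) and the epigraph domain `Ω = {(x, y) : y > f(x)} ⊆ ℝ²`, the limit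
`lim_{ε→0⁺} H¹(Ω ∩ ∂B_ε(0)) / H¹(∂B_ε(0))` defining `Γ` fails to exist at `p = 0`. -/
theorem gamma_may_fail_to_exist
    (f : ℝ → ℝ) (hf : f = fun x => if x = 0 then 0 else |x| * Real.sin (Real.log |x|))
    (Ω : Set (EuclideanSpace ℝ (Fin 2))) (hΩ : Ω = {q : EuclideanSpace ℝ (Fin 2) | f (q 0) < q 1}) :
    (∃ K : ℝ≥0, LipschitzWith K f) ∧
      ¬ ∃ L : ℝ, Tendsto (fun ε : ℝ =>
          (μH[(1 : ℝ)] (Ω ∩ sphere (0 : EuclideanSpace ℝ (Fin 2)) ε)).toReal /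
            (μH[(1 : ℝ)] (sphere (0 : EuclideanSpace ℝ (Fin 2)) ε)).toReal)
        (𝓝[>] 0) (𝓝 L) := by
  have hf' : f = fun x => |x| * sin (log |x|) := by
    rw [hf]
    funext x
    split_ifs with h <;> simp [h]
  subst hf' hΩ
  refine ⟨⟨2, lipschitzWith_abs_mul_sin_log⟩, ?_⟩
  rintro ⟨L, hL⟩
  have key (s : ℝ) : (μH[(1 : ℝ)] (circleAbove s)).toReal /
      (μH[(1 : ℝ)] (sphere (0 : EuclideanSpace ℝ (Fin 2)) 1)).toReal = L := by
    refine tendsto_nhds_unique tendsto_const_nhds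
      ((hL.comp (tendsto_exp_sub_nat_mul_two_pi s)).congr fun n => ?_)
    rw [Function.comp_apply, hausdorffMeasure_ratio_eq (exp_pos _), log_exp,
      circleAbove_sub_nat_mul_two_pi]
  have hS := hausdorffMeasure_unitSphere_lt_top
  have hle : μH[(1 : ℝ)] (circleAbove (-(π / 2))) ≤
      μH[(1 : ℝ)] (sphere (0 : EuclideanSpace ℝ (Fin 2)) 1) :=
    measure_mono Set.inter_subset_right
  have hlt := hausdorffMeasure_circleAbove_lt
  have hpos := ENNReal.toReal_pos (bot_lt_of_lt (hlt.trans_le hle)).ne' hS.ne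
  refine (ENNReal.toReal_strict_mono (hle.trans_lt hS).ne hlt).ne ?_
  exact (div_left_inj' hpos.ne').1 ((key _).trans (key _).symm)
end
end

section
/- Let a, b ∈ ℝ, set c = √(a² + b²), let δ ∈ ℝ satisfy a = c cos δ and b = c sin δ, and set d = c/√(1 + c²). Define h(θ) = arccot(a cos θ + b sin θ), where arccot : ℝ → (0, π) is the inverse cotangent. Then for all θ₁ ≤ θ₂, ∫_{θ₁}^{θ₂} ∫_0^{h(θ)} sin φ dφ dθ = (θ₂ − θ₁) − arcsin(d sin(θ₂ − δ)) + arcsin(d sin(θ₁ − δ)). -/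
open Real intervalIntegral

noncomputable section

/-- The inverse cotangent `arccot : ℝ → (0, π)`, the branch satisfying
`cot (arccot t) = t` and `arccot t ∈ (0, π)`. -/
def arccot (t : ℝ) : ℝ := π / 2 - Real.arctan t

theorem hasDerivAt_arcsin_mul_sin (c x : ℝ) :
    HasDerivAt (fun x => Real.arcsin (c / √(1 + c ^ 2) * Real.sin x))
      (Real.sin (Real.arctan (c * Real.cos x))) x := by
  have hc : 0 < 1 + c ^ 2 := by positivity
  have hs : 0 < √(1 + c ^ 2) := Real.sqrt_pos.2 hc
  have hsq : √(1 + c ^ 2) ^ 2 = 1 + c ^ 2 := Real.sq_sqrt hc.le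
  have key : 1 - (c / √(1 + c ^ 2) * Real.sin x) ^ 2
      = (1 + (c * Real.cos x) ^ 2) / (1 + c ^ 2) := by
    rw [mul_pow, div_pow, hsq, mul_pow, Real.cos_sq']
    field_simp
    ring
  have hlt : (c / √(1 + c ^ 2) * Real.sin x) ^ 2 < 1 := by
    have : 0 < (1 + (c * Real.cos x) ^ 2) / (1 + c ^ 2) := by positivity
    linarith
  have habs := abs_lt.1 ((sq_lt_one_iff_abs_lt_one _).1 hlt)
  have hderiv := (Real.hasDerivAt_arcsin habs.1.ne' habs.2.ne).comp x
    ((Real.hasDerivAt_sin x).const_mul (c / √(1 + c ^ 2)))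
  refine hderiv.congr_deriv ?_
  have hu : 0 < √(1 + (c * Real.cos x) ^ 2) := Real.sqrt_pos.2 (by positivity)
  rw [key, Real.sqrt_div (by positivity), Real.sin_arctan]
  field_simp

theorem integral_sin_zero_arccot (t : ℝ) :
    ∫ φ in (0 : ℝ)..arccot t, Real.sin φ = 1 - Real.sin (Real.arctan t) := by
  rw [integral_sin, arccot, Real.cos_zero, Real.cos_pi_div_two_sub]

/-- With `c = √(a² + b²)`, `δ` such that `a = c cos δ` and `b = c sin δ`,
`d = c/√(1+c²)` and `h(θ) = arccot(a cos θ + b sin θ)`, for all `θ₁ ≤ θ₂`: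
`∫_{θ₁}^{θ₂} ∫_0^{h(θ)} sin φ dφ dθ
  = (θ₂ - θ₁) - arcsin(d sin(θ₂ - δ)) + arcsin(d sin(θ₁ - δ))`. -/
theorem solid_angle_sector_integral
    (a b : ℝ) (c : ℝ) (hc : c = Real.sqrt (a ^ 2 + b ^ 2))
    (δ : ℝ) (hδa : a = c * Real.cos δ) (hδb : b = c * Real.sin δ)
    (d : ℝ) (hd : d = c / Real.sqrt (1 + c ^ 2))
    (h : ℝ → ℝ) (hh : h = fun θ => arccot (a * Real.cos θ + b * Real.sin θ)) :
    ∀ θ₁ θ₂ : ℝ, θ₁ ≤ θ₂ →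
      (∫ θ in θ₁..θ₂, ∫ φ in (0 : ℝ)..(h θ), Real.sin φ) =
        (θ₂ - θ₁) - Real.arcsin (d * Real.sin (θ₂ - δ)) + Real.arcsin (d * Real.sin (θ₁ - δ)) := by
  intro θ₁ θ₂ _
  have hu (θ : ℝ) : a * Real.cos θ + b * Real.sin θ = c * Real.cos (θ - δ) := by
    rw [Real.cos_sub]
    linear_combination Real.cos θ * hδa + Real.sin θ * hδb
  have hderiv (θ : ℝ) : HasDerivAt (fun θ => θ - Real.arcsin (d * Real.sin (θ - δ)))
      (1 - Real.sin (Real.arctan (c * Real.cos (θ - δ)))) θ := by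
    rw [hd]
    exact (hasDerivAt_id θ).sub ((hasDerivAt_arcsin_mul_sin c (θ - δ)).comp_sub_const θ δ)
  have hcont : Continuous fun θ => 1 - Real.sin (Real.arctan (c * Real.cos (θ - δ))) := by
    fun_prop
  simp only [hh, integral_sin_zero_arccot, hu]
  rw [integral_eq_sub_of_hasDerivAt (fun θ _ => hderiv θ) (hcont.intervalIntegrable _ _)]
  ring
end
end
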